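/- There is an absolute constant C > 0 such that the following holds with δ(ξ,ε) = (ξε)^C / C and n₁(ξ,ε) = C·(ξε)^{-C}, for all ξ, ε ∈ (0,1). Let H be a 3-uniform hypergraph on n ≥ n₁(ξ,ε) vertices and let v ∈ V(H) be such that: (1) ξ ≤ d(L(v)) ≤ 1 − ξ; (2) H contains fewer than δ(ξ,ε)·n⁴ induced copies of D₂; (3) H contains fewer than δ(ξ,ε)·n³ induced copies of D₂ containing v. Then there is a partition V(H) = X ∪ Y ∪ S such that |X|, |Y| ≥ (ξ/10)·n, |S| ≤ (ξ/2)·n, and (X,Y) is ε-homogeneous. -/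

import Mathlib

open Finset

/-- The number of induced copies of `D₂` (4 vertices spanning exactly 2 edges). -/
def inducedD2Count {V : Type} [Fintype V] [DecidableEq V] (E : Finset (Finset V)) : ℕ :=
  (((Finset.univ : Finset V).powersetCard 4).filter
    (fun S => (E.filter (fun e => e ⊆ S)).card = 2)).card

/-- The number of induced copies of `D₂` which contain the vertex `v`. -/
def inducedD2CountVia {V : Type} [Fintype V] [DecidableEq V]
    (E : Finset (Finset V)) (v : V) : ℕ :=
  (((Finset.univ : Finset V).powersetCard 4).filter
    (fun S => v ∈ S ∧ (E.filter (fun e => e ⊆ S)).card = 2)).card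

/-- The density of the link graph of `v`: the number of hyperedges containing `v`,
divided by `C(n-1, 2)`. -/
noncomputable def dLinkDensity {V : Type} [Fintype V] [DecidableEq V]
    (E : Finset (Finset V)) (v : V) : ℝ :=
  ((E.filter (fun e => v ∈ e)).card : ℝ) / ((Fintype.card V - 1).choose 2 : ℝ)

/-- `e(X,X,Y)`: the number of edges with two vertices in `X` and one vertex in `Y`. -/
def eXXY {V : Type} [DecidableEq V] (E : Finset (Finset V)) (X Y : Finset V) : ℕ :=
  (E.filter (fun e => (e ∩ X).card = 2 ∧ (e ∩ Y).card = 1)).card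

/-- `d(X,X,Y) = e(X,X,Y) / (C(|X|,2)·|Y|)`. -/
noncomputable def dXXY {V : Type} [DecidableEq V] (E : Finset (Finset V))
    (X Y : Finset V) : ℝ :=
  (eXXY E X Y : ℝ) / ((X.card.choose 2 : ℝ) * (Y.card : ℝ))

/-- The pair `(X,Y)` is `ε`-homogeneous. -/
noncomputable def EpsHomogeneous {V : Type} [DecidableEq V]
    (E : Finset (Finset V)) (X Y : Finset V) (ε : ℝ) : Prop :=
  (dXXY E X Y ≥ 1 - ε ∧ dXXY E Y X ≥ 1 - ε) ∨ (dXXY E X Y ≤ ε ∧ dXXY E Y X ≤ ε)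

/-!
If `w, x, y, z` is an induced path of the link graph `G` of `v`, then some four of the vertices
`v, w, x, y, z` induce a copy of `D₂`, so `G` has few induced paths on four vertices. By an
approximate version of Seinsche's theorem, every large vertex set then has a cut that is sparse in
`G` or in its complement. Splitting off a side of such a cut again and again yields, up to
complementing the hypergraph, large sets `X` and `Y = Y₁ ∪ Y₂` covering most vertices, such that
`G` is sparse between `X` and `Y` and almost complete between `Y₁` and `Y₂`, together with large
witness sets `Zᵢ` that are almost joined to `Yᵢ` and almost detached from `X`.

A hyperedge `y y' x` with `y, y' ∈ Y` and `x ∈ X` is therefore typically part of a copy of `D₂`: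
if `y y'` is an edge of `G`, the copy is `v, y, y', x`; if `y` and `y'` lie in the same `Yᵢ`, it is
found among `v, y, y', x, z` for almost every `z ∈ Zᵢ`. So there are few hyperedges `y y' x`. Two
hyperedges `x x' y` and `x x' y'` then typically make `x, x', y, y'` a copy of `D₂`, and by
Cauchy-Schwarz there are few hyperedges `x x' y` as well.
-/

section Iverson

/-- The Iverson bracket `[p]`, a real number so that counts can be manipulated as sums. -/
noncomputable def iverson (p : Prop) : ℝ :=
  open Classical in if p then 1 else 0

variable {α : Type*} {p q r : Prop}

lemma iverson_of_true (h : p) : iverson p = 1 := if_pos h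

lemma iverson_of_false (h : ¬ p) : iverson p = 0 := if_neg h

lemma iverson_nonneg (p : Prop) : 0 ≤ iverson p := by
  unfold iverson; split_ifs <;> norm_num

lemma iverson_le_of_imp {t : ℝ} (ht : 0 ≤ t) (h : p → 1 ≤ t) : iverson p ≤ t := by
  by_cases hp : p
  · exact (iverson_of_true hp).trans_le (h hp)
  · exact (iverson_of_false hp).trans_le ht

lemma iverson_mono (h : p → q) : iverson p ≤ iverson q :=
  iverson_le_of_imp (iverson_nonneg q) fun hp => (iverson_of_true (h hp)).ge

lemma iverson_congr (h : p ↔ q) : iverson p = iverson q := by rw [h]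

lemma iverson_and (p q : Prop) : iverson (p ∧ q) = iverson p * iverson q := by
  by_cases hp : p <;> by_cases hq : q <;> simp [iverson, hp, hq]

lemma iverson_not (p : Prop) : iverson (¬ p) = 1 - iverson p := by
  by_cases hp : p <;> simp [iverson, hp]

lemma iverson_le_add (h : p → q ∨ r) : iverson p ≤ iverson q + iverson r :=
  iverson_le_of_imp (add_nonneg (iverson_nonneg q) (iverson_nonneg r)) fun hp => by
    rcases h hp with hq | hr
    · linarith [iverson_of_true hq, iverson_nonneg r]
    · linarith [iverson_of_true hr, iverson_nonneg q]

lemma iverson_or_le_add {t : ℝ} (h : iverson q ≤ t) : iverson (p ∨ q) ≤ iverson p + t :=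
  (iverson_le_add id).trans (add_le_add_right h _)

lemma sum_iverson (A : Finset α) (P : α → Prop) [DecidablePred P] :
    ∑ a ∈ A, iverson (P a) = #{a ∈ A | P a} := by
  rw [card_filter, Nat.cast_sum]
  refine sum_congr rfl fun a _ => ?_
  by_cases h : P a <;> simp [iverson, h]

lemma sum_iverson_le_card (A : Finset α) (P : α → Prop) : ∑ a ∈ A, iverson (P a) ≤ #A := by
  classical
  rw [sum_iverson]
  exact_mod_cast card_filter_le A P

lemma sum_iverson_mem_le_card (A B : Finset α) : ∑ a ∈ A, iverson (a ∈ B) ≤ #B := by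
  classical
  rw [sum_iverson]
  exact_mod_cast card_le_card fun a ha => (mem_filter.1 ha).2

lemma card_filter_lt_le_of_sum_le (A : Finset α) {f : α → ℝ} (hf : ∀ a ∈ A, 0 ≤ f a)
    {t b : ℝ} (ht : 0 < t) (h : ∑ a ∈ A, f a ≤ b * t) [DecidablePred fun a => t < f a] :
    (#{a ∈ A | t < f a} : ℝ) ≤ b := by
  refine le_of_mul_le_mul_right ?_ ht
  calc (#{a ∈ A | t < f a} : ℝ) * t = ∑ _ ∈ {a ∈ A | t < f a}, t := by simp
    _ ≤ ∑ a ∈ A with t < f a, f a := sum_le_sum fun a ha => (mem_filter.1 ha).2.le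
    _ ≤ ∑ a ∈ A, f a :=
      sum_le_sum_of_subset_of_nonneg (filter_subset _ _) fun a ha _ => hf a ha
    _ ≤ b * t := h

end Iverson

section CrossCount

variable {V : Type*} (G : SimpleGraph V)

/-- The number of neighbours of `x` in `A`. -/
noncomputable def degreeInto (A : Finset V) (x : V) : ℝ :=
  ∑ y ∈ A, iverson (G.Adj x y)

/-- The number of pairs `(a, b) ∈ A × B` that are edges of `G`; in particular `crossCount G A A`
is twice the number of edges inside `A`. -/
noncomputable def crossCount (A B : Finset V) : ℝ :=
  ∑ a ∈ A, degreeInto G B a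

lemma degreeInto_nonneg (A : Finset V) (x : V) : 0 ≤ degreeInto G A x :=
  sum_nonneg fun _ _ => iverson_nonneg _

lemma degreeInto_le_card (A : Finset V) (x : V) : degreeInto G A x ≤ #A :=
  sum_iverson_le_card A _

lemma degreeInto_mono {A A' : Finset V} (h : A ⊆ A') (x : V) :
    degreeInto G A x ≤ degreeInto G A' x :=
  sum_le_sum_of_subset_of_nonneg h fun _ _ _ => iverson_nonneg _

lemma crossCount_nonneg (A B : Finset V) : 0 ≤ crossCount G A B :=
  sum_nonneg fun _ _ => degreeInto_nonneg G _ _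

lemma crossCount_comm (A B : Finset V) : crossCount G A B = crossCount G B A := by
  unfold crossCount degreeInto
  rw [sum_comm]
  simp only [G.adj_comm]

lemma crossCount_mono {A A' B B' : Finset V} (hA : A ⊆ A') (hB : B ⊆ B') :
    crossCount G A B ≤ crossCount G A' B' :=
  (sum_le_sum fun a _ => degreeInto_mono G hB a).trans
    (sum_le_sum_of_subset_of_nonneg hA fun _ _ _ => degreeInto_nonneg G _ _)

lemma crossCount_le_card_mul_card (A B : Finset V) : crossCount G A B ≤ #A * #B :=
  (sum_le_sum fun a _ => degreeInto_le_card G B a).trans_eq (by simp)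

variable [DecidableEq V]

lemma crossCount_union_left {A A' : Finset V} (h : Disjoint A A') (B : Finset V) :
    crossCount G (A ∪ A') B = crossCount G A B + crossCount G A' B :=
  sum_union h

lemma crossCount_union_right (A : Finset V) {B B' : Finset V} (h : Disjoint B B') :
    crossCount G A (B ∪ B') = crossCount G A B + crossCount G A B' := by
  simp only [crossCount_comm G A, crossCount_union_left G h]

lemma crossCount_union_self {A B : Finset V} (h : Disjoint A B) :
    crossCount G (A ∪ B) (A ∪ B)
      = crossCount G A A + 2 * crossCount G A B + crossCount G B B := by
  rw [crossCount_union_left G h, crossCount_union_right G _ h, crossCount_union_right G _ h,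
    crossCount_comm G B A]
  ring

end CrossCount

section Cut

variable {V : Type*} [DecidableEq V]

/-- A partition of `C` into two nonempty parts. -/
structure IsCut (C C₁ C₂ : Finset V) : Prop where
  disjoint : Disjoint C₁ C₂
  union_eq : C₁ ∪ C₂ = C
  nonempty_left : C₁.Nonempty
  nonempty_right : C₂.Nonempty

/-- Every cut of `W` has `G`-density greater than `η`. -/
def NoSparseCut (G : SimpleGraph V) (W : Finset V) (η : ℝ) : Prop :=
  ∀ ⦃W₁ W₂ : Finset V⦄, IsCut W W₁ W₂ → η * #W₁ * #W₂ < crossCount G W₁ W₂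

variable {G : SimpleGraph V} {W C C₁ C₂ : Finset V} {η : ℝ}

lemma IsCut.symm (h : IsCut C C₁ C₂) : IsCut C C₂ C₁ :=
  ⟨h.disjoint.symm, union_comm C₂ C₁ ▸ h.union_eq, h.nonempty_right, h.nonempty_left⟩

lemma IsCut.left_subset (h : IsCut C C₁ C₂) : C₁ ⊆ C :=
  h.union_eq ▸ subset_union_left

lemma IsCut.right_subset (h : IsCut C C₁ C₂) : C₂ ⊆ C :=
  h.symm.left_subset

lemma IsCut.card_add_card (h : IsCut C C₁ C₂) : #C₁ + #C₂ = #C := by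
  rw [← h.union_eq, card_union_of_disjoint h.disjoint]

lemma isCut_singleton_erase {x : V} (hx : x ∈ W) (hW : 2 ≤ #W) : IsCut W {x} (W.erase x) where
  disjoint := by simp
  union_eq := by rw [← insert_eq, insert_erase hx]
  nonempty_left := singleton_nonempty x
  nonempty_right := by rw [← card_pos, card_erase_of_mem hx]; omega

lemma NoSparseCut.half_mul_card_le_degreeInto (h : NoSparseCut G W η) (hη : 0 < η) (hW : 2 ≤ #W)
    {x : V} (hx : x ∈ W) : η / 2 * #W ≤ degreeInto G W x := by
  have hcut := h (isCut_singleton_erase hx hW)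
  have hmono := degreeInto_mono G (erase_subset x W) x
  have hcard : (#(W.erase x) : ℝ) + 1 = #W := by exact_mod_cast card_erase_add_one hx
  have hW' : (2 : ℝ) ≤ #W := by exact_mod_cast hW
  simp only [crossCount, sum_singleton, card_singleton, Nat.cast_one] at hcut
  nlinarith

end Cut

section InducedP4

variable {V : Type*} {G : SimpleGraph V} {w x y z : V}

/-- `w x y z` is an induced path of `G`, in this order. -/
def IsInducedP4 (G : SimpleGraph V) (w x y z : V) : Prop :=
  G.Adj w x ∧ G.Adj x y ∧ G.Adj y z ∧ ¬ G.Adj w y ∧ ¬ G.Adj w z ∧ ¬ G.Adj x z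

lemma IsInducedP4.of_compl (h : IsInducedP4 Gᶜ w x y z) : IsInducedP4 G y w z x := by
  obtain ⟨hwx, hxy, hyz, hwy, hwz, hxz⟩ := h
  have hwy' : w ≠ y := by rintro rfl; exact hwz hyz
  have hwz' : w ≠ z := by rintro rfl; exact hxz hwx.symm
  have hxz' : x ≠ z := by rintro rfl; exact hwz hwx
  simp only [SimpleGraph.compl_adj, not_and, not_not] at *
  exact ⟨(hwy hwy').symm, hwz hwz', (hxz hxz').symm, hyz.2, fun h => hxy.2 h.symm, hwx.2⟩

variable [DecidableEq V] {S : Finset V}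

/-- The vertices in `S` are those of an induced four-vertex path of `G`. -/
def SpansP4 (G : SimpleGraph V) (S : Finset V) : Prop :=
  ∃ w x y z, IsInducedP4 G w x y z ∧ S = {w, x, y, z}

lemma IsInducedP4.spansP4 (h : IsInducedP4 G w x y z) (hS : S = {w, x, y, z}) : SpansP4 G S :=
  ⟨w, x, y, z, h, hS⟩

lemma SpansP4.of_compl (h : SpansP4 Gᶜ S) : SpansP4 G S := by
  obtain ⟨w, x, y, z, h, rfl⟩ := h
  exact h.of_compl.spansP4 (by ext; simp only [mem_insert, mem_singleton]; tauto)

lemma spansP4_compl : SpansP4 Gᶜ S ↔ SpansP4 G S :=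
  ⟨SpansP4.of_compl, fun h => SpansP4.of_compl (by rwa [compl_compl])⟩

variable (G) (W : Finset V)

/-- The indicator that `a, b, c, d` are, in some order, the vertices of an induced path of `G`. -/
noncomputable def p4Indicator (a b c d : V) : ℝ :=
  iverson (SpansP4 G {a, b, c, d})

/-- The number of `d ∈ W` such that `a, b, c, d` span an induced path of `G`. -/
noncomputable def p4Count₃ (a b c : V) : ℝ :=
  ∑ d ∈ W, p4Indicator G a b c d

/-- The number of `(c, d) ∈ W²` such that `a, b, c, d` span an induced path of `G`. -/
noncomputable def p4Count₂ (a b : V) : ℝ :=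
  ∑ c ∈ W, p4Count₃ G W a b c

/-- The number of `(b, c, d) ∈ W³` such that `a, b, c, d` span an induced path of `G`. -/
noncomputable def p4Count₁ (a : V) : ℝ :=
  ∑ b ∈ W, p4Count₂ G W a b

/-- The number of `(a, b, c, d) ∈ W⁴` that span an induced path of `G`; each induced path is
counted once for each of its 24 orderings. -/
noncomputable def p4Count : ℝ :=
  ∑ a ∈ W, p4Count₁ G W a

lemma p4Indicator_nonneg (a b c d : V) : 0 ≤ p4Indicator G a b c d := iverson_nonneg _

lemma p4Count₃_nonneg (a b c : V) : 0 ≤ p4Count₃ G W a b c :=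
  sum_nonneg fun _ _ => p4Indicator_nonneg G _ _ _ _

lemma p4Count₂_nonneg (a b : V) : 0 ≤ p4Count₂ G W a b :=
  sum_nonneg fun _ _ => p4Count₃_nonneg G W _ _ _

lemma p4Count₁_nonneg (a : V) : 0 ≤ p4Count₁ G W a :=
  sum_nonneg fun _ _ => p4Count₂_nonneg G W _ _

lemma p4Indicator_compl : p4Indicator Gᶜ = p4Indicator G := by
  ext a b c d
  exact iverson_congr spansP4_compl

lemma p4Count₂_compl : p4Count₂ Gᶜ W = p4Count₂ G W := by
  ext a b
  simp only [p4Count₂, p4Count₃, p4Indicator_compl]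

lemma p4Count₁_compl : p4Count₁ Gᶜ W = p4Count₁ G W := by
  ext a
  simp only [p4Count₁, p4Count₂_compl]

variable {G W}

lemma p4Indicator_eq_one {a b c d : V} (h : IsInducedP4 G w x y z)
    (hS : ({a, b, c, d} : Finset V) = {w, x, y, z}) : p4Indicator G a b c d = 1 :=
  iverson_of_true (h.spansP4 hS)

lemma one_le_p4Indicator_add_add {u a x c d : V} (hua : G.Adj u a) (hux : G.Adj u x)
    (hxc : G.Adj x c) (huc : ¬ G.Adj u c) (hac : ¬ G.Adj a c) (had : G.Adj a d)
    (hxd : ¬ G.Adj x d) (hud : ¬ G.Adj u d) :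
    1 ≤ p4Indicator G a x c d + p4Indicator G u a c d + p4Indicator G u a x c := by
  have h₁ := p4Indicator_nonneg G a x c d
  have h₂ := p4Indicator_nonneg G u a c d
  have h₃ := p4Indicator_nonneg G u a x c
  by_cases hxa : G.Adj x a
  · by_cases hcd : G.Adj c d
    · have huadc : IsInducedP4 G u a d c := ⟨hua, had, hcd.symm, hud, huc, hac⟩
      have : p4Indicator G u a c d = 1 := p4Indicator_eq_one huadc (by grind)
      linarith
    · have hcxad : IsInducedP4 G c x a d :=
        ⟨hxc.symm, hxa, had, fun h => hac h.symm, hcd, hxd⟩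
      have : p4Indicator G a x c d = 1 := p4Indicator_eq_one hcxad (by grind)
      linarith
  · have hcxua : IsInducedP4 G c x u a :=
      ⟨hxc.symm, hux.symm, hua, fun h => huc h.symm, fun h => hac h.symm, hxa⟩
    have : p4Indicator G u a x c = 1 := p4Indicator_eq_one hcxua (by grind)
    linarith

end InducedP4

section ApproximateSeinsche

variable {V : Type*} {G : SimpleGraph V} {W : Finset V} {u a x : V}

open Classical in
/-- The vertices of `W` other than `u` that are not adjacent to `u`. -/
noncomputable def nonNeighbors (G : SimpleGraph V) (W : Finset V) (u : V) : Finset V :=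
  {x ∈ W | x ≠ u ∧ ¬ G.Adj u x}

open Classical in
/-- The vertices of `W` other than `u` that are adjacent to neither `u` nor `a`. -/
noncomputable def commonNonNeighbors (G : SimpleGraph V) (W : Finset V) (u a : V) : Finset V :=
  {x ∈ nonNeighbors G W u | ¬ G.Adj a x}

lemma mem_nonNeighbors : x ∈ nonNeighbors G W u ↔ x ∈ W ∧ x ≠ u ∧ ¬ G.Adj u x := by
  classical
  exact mem_filter

lemma mem_commonNonNeighbors :
    x ∈ commonNonNeighbors G W u a ↔ x ∈ W ∧ x ≠ u ∧ ¬ G.Adj u x ∧ ¬ G.Adj a x := by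
  classical
  simp only [commonNonNeighbors, mem_filter, mem_nonNeighbors, and_assoc]

lemma nonNeighbors_subset (G : SimpleGraph V) (W : Finset V) (u : V) : nonNeighbors G W u ⊆ W :=
  fun _ hx => (mem_nonNeighbors.1 hx).1

lemma commonNonNeighbors_subset (G : SimpleGraph V) (W : Finset V) (u a : V) :
    commonNonNeighbors G W u a ⊆ W :=
  fun _ hx => (mem_commonNonNeighbors.1 hx).1

lemma degreeInto_commonNonNeighbors_le_of_degreeInto_le
    (h : degreeInto G (nonNeighbors G W u) x ≤ degreeInto G (nonNeighbors G W u) a) :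
    degreeInto G (commonNonNeighbors G W u a) x
      ≤ ∑ d ∈ nonNeighbors G W u, iverson (G.Adj a d ∧ ¬ G.Adj x d) := by
  classical
  set M := nonNeighbors G W u
  have hfilter : degreeInto G (commonNonNeighbors G W u a) x
      = ∑ d ∈ M, iverson (G.Adj x d ∧ ¬ G.Adj a d) := by
    rw [degreeInto, commonNonNeighbors, sum_filter]
    refine sum_congr rfl fun d _ => ?_
    by_cases had : G.Adj a d <;> simp [iverson, had]
  have hexchange : ∑ d ∈ M, iverson (G.Adj a d ∧ ¬ G.Adj x d) - degreeInto G M a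
      = ∑ d ∈ M, iverson (G.Adj x d ∧ ¬ G.Adj a d) - degreeInto G M x := by
    simp only [degreeInto, ← sum_sub_distrib, iverson_and, iverson_not]
    exact sum_congr rfl fun d _ => by ring
  linarith

variable [DecidableEq V]

lemma sq_degreeInto_le_of_adj (hua : G.Adj u a) (hux : G.Adj u x)
    (hmax : degreeInto G (nonNeighbors G W u) x ≤ degreeInto G (nonNeighbors G W u) a) :
    degreeInto G (commonNonNeighbors G W u a) x ^ 2
      ≤ p4Count₂ G W a x + p4Count₂ G W u a + #W * p4Count₃ G W u a x := by
  set M := nonNeighbors G W u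
  set M' := commonNonNeighbors G W u a
  have hterm : ∀ c ∈ M', ∀ d ∈ M, iverson (G.Adj x c) * iverson (G.Adj a d ∧ ¬ G.Adj x d)
      ≤ p4Indicator G a x c d + p4Indicator G u a c d + p4Indicator G u a x c := by
    intro c hc d hd
    rw [← iverson_and]
    refine iverson_le_of_imp (add_nonneg (add_nonneg (p4Indicator_nonneg ..)
      (p4Indicator_nonneg ..)) (p4Indicator_nonneg ..)) fun ⟨hxc, had, hxd⟩ => ?_
    obtain ⟨-, -, huc, hac⟩ := mem_commonNonNeighbors.1 hc
    exact one_le_p4Indicator_add_add hua hux hxc huc hac had hxd (mem_nonNeighbors.1 hd).2.2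
  calc degreeInto G M' x ^ 2
      ≤ degreeInto G M' x * ∑ d ∈ M, iverson (G.Adj a d ∧ ¬ G.Adj x d) := by
        rw [sq]
        exact mul_le_mul_of_nonneg_left (degreeInto_commonNonNeighbors_le_of_degreeInto_le hmax)
          (degreeInto_nonneg G _ _)
    _ = ∑ c ∈ M', ∑ d ∈ M, iverson (G.Adj x c) * iverson (G.Adj a d ∧ ¬ G.Adj x d) :=
        sum_mul_sum ..
    _ ≤ ∑ c ∈ M', ∑ d ∈ M,
          (p4Indicator G a x c d + p4Indicator G u a c d + p4Indicator G u a x c) :=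
        sum_le_sum fun c hc => sum_le_sum fun d hd => hterm c hc d hd
    _ ≤ ∑ c ∈ W, ∑ d ∈ W,
          (p4Indicator G a x c d + p4Indicator G u a c d + p4Indicator G u a x c) := by
        have hpos : ∀ c d, 0 ≤ p4Indicator G a x c d + p4Indicator G u a c d
            + p4Indicator G u a x c := fun c d => add_nonneg (add_nonneg
          (p4Indicator_nonneg ..) (p4Indicator_nonneg ..)) (p4Indicator_nonneg ..)
        refine (sum_le_sum fun c _ => sum_le_sum_of_subset_of_nonneg
          (nonNeighbors_subset G W u) fun d _ _ => hpos c d).trans ?_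
        exact sum_le_sum_of_subset_of_nonneg (commonNonNeighbors_subset G W u a)
          fun c _ _ => sum_nonneg fun d _ => hpos c d
    _ = p4Count₂ G W a x + p4Count₂ G W u a + #W * p4Count₃ G W u a x := by
        simp only [sum_add_distrib, sum_const, nsmul_eq_mul, p4Count₂, p4Count₃, mul_sum]

lemma degreeInto_le_p4Count₃_of_not_adj (hua : G.Adj u a) (hxW : x ∈ W)
    (hx : x ∉ commonNonNeighbors G W u a) (hux : ¬ G.Adj u x) :
    degreeInto G (commonNonNeighbors G W u a) x ≤ p4Count₃ G W u a x := by
  calc degreeInto G (commonNonNeighbors G W u a) x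
      ≤ ∑ c ∈ commonNonNeighbors G W u a, p4Indicator G u a x c := by
        refine sum_le_sum fun c hc => iverson_le_of_imp (p4Indicator_nonneg ..) fun hxc => ?_
        obtain ⟨-, -, huc, hac⟩ := mem_commonNonNeighbors.1 hc
        have hxu : x ≠ u := by rintro rfl; exact huc hxc
        have hax : G.Adj a x := by
          by_contra hax
          exact hx (mem_commonNonNeighbors.2 ⟨hxW, hxu, hux, hax⟩)
        exact (p4Indicator_eq_one ⟨hua, hax, hxc, hux, huc, hac⟩ rfl).ge
    _ ≤ p4Count₃ G W u a x :=
        sum_le_sum_of_subset_of_nonneg (commonNonNeighbors_subset G W u a)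
          fun _ _ _ => p4Indicator_nonneg ..

lemma sq_degreeInto_commonNonNeighbors_le (hua : G.Adj u a) (hxW : x ∈ W)
    (hx : x ∉ commonNonNeighbors G W u a)
    (hmax : G.Adj u x →
      degreeInto G (nonNeighbors G W u) x ≤ degreeInto G (nonNeighbors G W u) a) :
    degreeInto G (commonNonNeighbors G W u a) x ^ 2
      ≤ p4Count₂ G W a x + p4Count₂ G W u a + #W * p4Count₃ G W u a x := by
  by_cases hux : G.Adj u x
  · exact sq_degreeInto_le_of_adj hua hux (hmax hux)
  · have hcard : degreeInto G (commonNonNeighbors G W u a) x ≤ #W :=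
      (degreeInto_mono G (commonNonNeighbors_subset G W u a) x).trans (degreeInto_le_card G W x)
    have hcount := degreeInto_le_p4Count₃_of_not_adj hua hxW hx hux
    have := mul_le_mul hcard hcount (degreeInto_nonneg G _ x) (Nat.cast_nonneg _)
    linarith [p4Count₂_nonneg G W a x, p4Count₂_nonneg G W u a]

/-- The vertex `a` lies in few induced paths of `G[W]`, and in few together with `u`. -/
def IsTypical (G : SimpleGraph V) (W : Finset V) (s : ℝ) (u a : V) : Prop :=
  p4Count₁ G W a ≤ s ^ 2 * #W ^ 3 ∧ p4Count₂ G W u a ≤ s ^ 2 * #W ^ 2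

lemma isTypical_compl {s : ℝ} : IsTypical Gᶜ W s u a ↔ IsTypical G W s u a := by
  simp only [IsTypical, p4Count₁_compl, p4Count₂_compl]

lemma sum_sq_degreeInto_commonNonNeighbors_le {R : Finset V} {s : ℝ} (hua : G.Adj u a)
    (hR : R ⊆ W \ commonNonNeighbors G W u a)
    (hmax : ∀ x ∈ R, G.Adj u x →
      degreeInto G (nonNeighbors G W u) x ≤ degreeInto G (nonNeighbors G W u) a)
    (ha : IsTypical G W s u a) :
    ∑ x ∈ R, degreeInto G (commonNonNeighbors G W u a) x ^ 2 ≤ 3 * s ^ 2 * #W ^ 3 := by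
  calc ∑ x ∈ R, degreeInto G (commonNonNeighbors G W u a) x ^ 2
      ≤ ∑ x ∈ R, (p4Count₂ G W a x + p4Count₂ G W u a + #W * p4Count₃ G W u a x) := by
        refine sum_le_sum fun x hx => ?_
        obtain ⟨hxW, hxM⟩ := mem_sdiff.1 (hR hx)
        exact sq_degreeInto_commonNonNeighbors_le hua hxW hxM (hmax x hx)
    _ ≤ ∑ x ∈ W, (p4Count₂ G W a x + p4Count₂ G W u a + #W * p4Count₃ G W u a x) :=
        sum_le_sum_of_subset_of_nonneg (hR.trans sdiff_subset) fun x _ _ =>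
          add_nonneg (add_nonneg (p4Count₂_nonneg ..) (p4Count₂_nonneg ..))
            (mul_nonneg (Nat.cast_nonneg _) (p4Count₃_nonneg ..))
    _ = p4Count₁ G W a + 2 * #W * p4Count₂ G W u a := by
        simp only [sum_add_distrib, sum_const, nsmul_eq_mul, ← mul_sum, p4Count₁, p4Count₂]
        ring
    _ ≤ s ^ 2 * #W ^ 3 + 2 * #W * (s ^ 2 * #W ^ 2) := by
        gcongr
        exacts [ha.1, ha.2]
    _ = 3 * s ^ 2 * #W ^ 3 := by ring

lemma crossCount_commonNonNeighbors_le {B : Finset V} {s β : ℝ} (hs : 0 ≤ s) (hua : G.Adj u a)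
    (hmax : ∀ x ∈ W, x ∉ B → G.Adj u x →
      degreeInto G (nonNeighbors G W u) x ≤ degreeInto G (nonNeighbors G W u) a)
    (hB : #B ≤ β * #W) (ha : IsTypical G W s u a) :
    crossCount G (W \ commonNonNeighbors G W u a) (commonNonNeighbors G W u a)
      ≤ (2 * s + β) * #W ^ 2 := by
  set M := commonNonNeighbors G W u a with hM
  set R := (W \ M) \ B with hR
  have hcard : (#R : ℝ) ≤ #W := by
    exact_mod_cast card_le_card (sdiff_subset.trans sdiff_subset)
  have hsq : ∑ x ∈ R, degreeInto G M x ^ 2 ≤ 3 * s ^ 2 * #W ^ 3 := by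
    refine sum_sq_degreeInto_commonNonNeighbors_le hua sdiff_subset (fun x hx => ?_) ha
    simp only [hR, mem_sdiff] at hx
    exact hmax x hx.1.1 hx.2
  have hgood : ∑ x ∈ R, degreeInto G M x ≤ 2 * s * #W ^ 2 := by
    refine le_of_sq_le_sq ?_ (by positivity)
    calc (∑ x ∈ R, degreeInto G M x) ^ 2
        ≤ #R * ∑ x ∈ R, degreeInto G M x ^ 2 := sq_sum_le_card_mul_sum_sq
      _ ≤ #W * (3 * s ^ 2 * #W ^ 3) := by gcongr
      _ ≤ (2 * s * #W ^ 2) ^ 2 := by nlinarith [sq_nonneg (s * (#W : ℝ) ^ 2)]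
  have hbad : ∑ x ∈ (W \ M) ∩ B, degreeInto G M x ≤ β * #W ^ 2 := by
    have hMW : (#M : ℝ) ≤ #W := by
      exact_mod_cast card_le_card (commonNonNeighbors_subset G W u a)
    calc ∑ x ∈ (W \ M) ∩ B, degreeInto G M x
        ≤ ∑ _x ∈ (W \ M) ∩ B, (#W : ℝ) :=
          sum_le_sum fun x _ => (degreeInto_le_card G M x).trans hMW
      _ = #((W \ M) ∩ B) * (#W : ℝ) := by simp
      _ ≤ #B * (#W : ℝ) := by gcongr; exact inter_subset_right
      _ ≤ β * #W * #W := by gcongr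
      _ = β * #W ^ 2 := by ring
  rw [crossCount, ← sum_inter_add_sum_sdiff (W \ M) B]
  linarith

variable {s β γ η : ℝ} {B : Finset V} {b : V}

lemma NoSparseCut.exists_card_commonNonNeighbors_lt (hG : NoSparseCut G W η) (hη : 0 < η)
    (hW : 2 ≤ #W) (hu : u ∈ W) (hs : 0 ≤ s) (hγ : 0 < γ) (hB : #B ≤ β * #W) (hβ : β < η / 2)
    (htypical : ∀ a ∈ W, a ∉ B → IsTypical G W s u a) (hpar : 2 * s + β ≤ η * γ * (η / 2)) :
    ∃ a ∈ W, a ∉ B ∧ G.Adj u a ∧ #(commonNonNeighbors G W u a) < γ * #W := by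
  classical
  have hm : (0 : ℝ) < #W := by exact_mod_cast card_pos.2 ⟨u, hu⟩
  have hdeg := hG.half_mul_card_le_degreeInto hη hW hu
  rw [degreeInto, sum_iverson] at hdeg
  have hne : ({x ∈ W | G.Adj u x} \ B).Nonempty := by
    rw [sdiff_nonempty]
    intro hsub
    have : (#{x ∈ W | G.Adj u x} : ℝ) ≤ #B := by exact_mod_cast card_le_card hsub
    nlinarith
  obtain ⟨a, ha, hmax⟩ := exists_max_image _ (degreeInto G (nonNeighbors G W u)) hne
  simp only [mem_sdiff, mem_filter] at ha hmax
  obtain ⟨⟨haW, hua⟩, haB⟩ := ha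
  refine ⟨a, haW, haB, hua, ?_⟩
  by_contra! hlarge
  set M := commonNonNeighbors G W u a
  have hsparse := crossCount_commonNonNeighbors_le hs hua
    (fun x hx hxB hux => hmax x ⟨⟨hx, hux⟩, hxB⟩) hB (htypical a haW haB)
  have hnbrs : {x ∈ W | G.Adj u x} ⊆ W \ M := by
    intro x hx
    rw [mem_filter] at hx
    exact mem_sdiff.2 ⟨hx.1, fun hxM => (mem_commonNonNeighbors.1 hxM).2.2.1 hx.2⟩
  have hcard : η / 2 * #W ≤ (#(W \ M) : ℝ) :=
    hdeg.trans (by exact_mod_cast card_le_card hnbrs)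
  have hcut : IsCut W (W \ M) M :=
    { disjoint := sdiff_disjoint
      union_eq := sdiff_union_of_subset (commonNonNeighbors_subset G W u a)
      nonempty_left := (hne.mono sdiff_subset).mono hnbrs
      nonempty_right := by
        rw [← card_pos, ← Nat.cast_pos (α := ℝ)]
        exact (mul_pos hγ hm).trans_le hlarge }
  have hdense : η * (η / 2 * #W) * (γ * #W) ≤ η * #(W \ M) * #M := by gcongr
  nlinarith [hG hcut, mul_le_mul_of_nonneg_right hpar (sq_nonneg (#W : ℝ))]

lemma exists_forall_isTypical (hW : W.Nonempty) (hs : 0 < s)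
    (hcount : p4Count G W ≤ s ^ 4 * #W ^ 4) :
    ∃ u ∈ W, ∃ B : Finset V, #B ≤ 2 * s ^ 2 * #W ∧
      ∀ a ∈ W, a ∉ B → IsTypical G W s u a := by
  classical
  obtain ⟨u, hu, hcount_u⟩ : ∃ u ∈ W, p4Count₁ G W u ≤ s ^ 4 * #W ^ 3 := by
    refine exists_le_of_sum_le hW (hcount.trans_eq ?_)
    rw [sum_const, nsmul_eq_mul]
    ring
  have hB₁ : (#{a ∈ W | s ^ 2 * #W ^ 3 < p4Count₁ G W a} : ℝ) ≤ s ^ 2 * #W :=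
    card_filter_lt_le_of_sum_le W (fun a _ => p4Count₁_nonneg G W a) (by positivity)
      (hcount.trans_eq (by ring))
  have hB₂ : (#{a ∈ W | s ^ 2 * #W ^ 2 < p4Count₂ G W u a} : ℝ) ≤ s ^ 2 * #W :=
    card_filter_lt_le_of_sum_le W (fun a _ => p4Count₂_nonneg G W u a) (by positivity)
      (hcount_u.trans_eq (by ring))
  refine ⟨u, hu, {a ∈ W | s ^ 2 * #W ^ 3 < p4Count₁ G W a}
    ∪ {a ∈ W | s ^ 2 * #W ^ 2 < p4Count₂ G W u a}, ?_, fun a ha haB => ?_⟩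
  · refine (Nat.cast_le.2 (card_union_le _ _)).trans ?_
    push_cast
    linarith
  · simpa [IsTypical, ha] using haB

lemma degreeInto_compl_le (hua : G.Adj u a) (hub : ¬ G.Adj u b) (hab : G.Adj a b) :
    degreeInto Gᶜ W a ≤ p4Count₃ G W u a b + #(commonNonNeighbors G W u a)
      + #(commonNonNeighbors Gᶜ W u b) := by
  have hterm : ∀ x ∈ W, iverson (Gᶜ.Adj a x) ≤ p4Indicator G u a b x
      + iverson (x ∈ commonNonNeighbors G W u a)
      + iverson (x ∈ commonNonNeighbors Gᶜ W u b) := by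
    intro x hx
    have h₁ := p4Indicator_nonneg G u a b x
    have h₂ := iverson_nonneg (x ∈ commonNonNeighbors G W u a)
    have h₃ := iverson_nonneg (x ∈ commonNonNeighbors Gᶜ W u b)
    refine iverson_le_of_imp (add_nonneg (add_nonneg h₁ h₂) h₃) fun hax => ?_
    simp only [SimpleGraph.compl_adj] at hax
    have hxu : x ≠ u := by rintro rfl; exact hax.2 hua.symm
    by_cases hux : G.Adj u x
    · by_cases hbx : G.Adj b x
      · have : x ∈ commonNonNeighbors Gᶜ W u b :=
          mem_commonNonNeighbors.2 ⟨hx, hxu, fun h => h.2 hux, fun h => h.2 hbx⟩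
        linarith [iverson_of_true this]
      · have hxuab : IsInducedP4 G x u a b :=
          ⟨hux.symm, hua, hab, fun h => hax.2 h.symm, fun h => hbx h.symm, hub⟩
        have : p4Indicator G u a b x = 1 := p4Indicator_eq_one hxuab (by grind)
        linarith
    · have : x ∈ commonNonNeighbors G W u a := mem_commonNonNeighbors.2 ⟨hx, hxu, hux, hax.2⟩
      linarith [iverson_of_true this]
  calc degreeInto Gᶜ W a ≤ _ := sum_le_sum hterm
    _ ≤ _ := by
      rw [sum_add_distrib, sum_add_distrib, p4Count₃]
      gcongr <;> exact sum_iverson_mem_le_card _ _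

lemma cast_card_union_le₃ (A B C : Finset V) : (#(A ∪ B ∪ C) : ℝ) ≤ #A + #B + #C := by
  exact_mod_cast (card_union_le (A ∪ B) C).trans (add_le_add_left (card_union_le A B) #C)

lemma exists_small_commonNonNeighbors (hW : 2 ≤ #W) (hη : 0 < η) (hη₁ : η < 1)
    (hcount : p4Count G W ≤ (η ^ 5 / 1000) ^ 4 * #W ^ 4) (hG : NoSparseCut G W η)
    (hGc : NoSparseCut Gᶜ W η) :
    ∃ u ∈ W, ∃ a ∈ W, ∃ b ∈ W, G.Adj u a ∧ ¬ G.Adj u b ∧ G.Adj a b ∧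
      #(commonNonNeighbors G W u a) < η ^ 3 / 64 * #W ∧
      #(commonNonNeighbors Gᶜ W u b) < η / 8 * #W ∧ p4Count₃ G W u a b ≤ η / 16 * #W := by
  classical
  obtain ⟨s, hs⟩ : ∃ s, s = η ^ 5 / 1000 := ⟨_, rfl⟩
  have hs₀ : 0 < s := by rw [hs]; positivity
  have hη₃ : η ^ 3 ≤ η := pow_le_of_le_one hη.le hη₁.le (by norm_num)
  have hη₅ : η ^ 5 ≤ η ^ 3 := pow_le_pow_of_le_one hη.le hη₁.le (by norm_num)
  have hm : (0 : ℝ) < #W := by exact_mod_cast (by omega : 0 < #W)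
  rw [← hs] at hcount
  obtain ⟨u, hu, B, hB, htypical⟩ :=
    exists_forall_isTypical (card_pos.1 (by omega)) hs₀ hcount
  have hs_sq : s ^ 2 ≤ η * s / 1000 := by nlinarith
  obtain ⟨a, haW, haB, hua, hMa⟩ := hG.exists_card_commonNonNeighbors_lt hη hW hu hs₀.le
    (γ := η ^ 3 / 64) (by positivity) hB (by nlinarith) htypical (by nlinarith)
  let Bₐ := {b ∈ W | η / 16 * #W < p4Count₃ G W u a b}
  have hBₐ : (#Bₐ : ℝ) ≤ s * #W / 60 := by
    refine card_filter_lt_le_of_sum_le W (fun b _ => p4Count₃_nonneg G W u a b)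
      (by positivity) ((htypical a haW haB).2.trans ?_)
    calc s ^ 2 * (#W : ℝ) ^ 2 ≤ (η * s / 960) * #W ^ 2 := by gcongr; nlinarith
      _ = s * #W / 60 * (η / 16 * #W) := by ring
  have hB' : (#(B ∪ Bₐ ∪ commonNonNeighbors G W u a) : ℝ) ≤ (s + η ^ 3 / 64) * #W := by
    have := cast_card_union_le₃ B Bₐ (commonNonNeighbors G W u a)
    have : 2 * s ^ 2 * #W ≤ 2 * (s / 1000) * #W := by gcongr; nlinarith
    nlinarith [mul_pos hs₀ hm]
  obtain ⟨b, hbW, hbB, hub, hMb⟩ := hGc.exists_card_commonNonNeighbors_lt hη hW hu hs₀.le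
    (γ := η / 8) (by positivity) hB' (by linarith)
    (fun a ha haB => isTypical_compl.2 (htypical a ha fun h =>
      haB (mem_union_left _ (mem_union_left _ h))))
    (by nlinarith)
  simp only [Bₐ, mem_union, mem_filter, mem_commonNonNeighbors, not_or] at hbB
  rw [SimpleGraph.compl_adj] at hub
  refine ⟨u, hu, a, haW, b, hbW, hua, hub.2, ?_, hMa, hMb, ?_⟩
  · by_contra hab
    exact hbB.2 ⟨hbW, hub.1.symm, hub.2, hab⟩
  · by_contra! hlarge
    exact hbB.1.2 ⟨hbW, hlarge⟩

theorem exists_isCut_of_p4Count_le (hW : 2 ≤ #W) (hη : 0 < η) (hη₁ : η < 1)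
    (hcount : p4Count G W ≤ (η ^ 5 / 1000) ^ 4 * #W ^ 4) :
    ∃ W₁ W₂ : Finset V, IsCut W W₁ W₂ ∧
      (crossCount G W₁ W₂ ≤ η * #W₁ * #W₂ ∨ crossCount Gᶜ W₁ W₂ ≤ η * #W₁ * #W₂) := by
  by_contra! hno
  have hG : NoSparseCut G W η := fun W₁ W₂ h => (hno W₁ W₂ h).1
  have hGc : NoSparseCut Gᶜ W η := fun W₁ W₂ h => (hno W₁ W₂ h).2
  obtain ⟨u, -, a, haW, b, -, hua, hub, hab, hMa, hMb, hPb⟩ :=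
    exists_small_commonNonNeighbors hW hη hη₁ hcount hG hGc
  have hupper := degreeInto_compl_le (W := W) hua hub hab
  have hlower := hGc.half_mul_card_le_degreeInto hη hW haW
  have hm : (0 : ℝ) < #W := by exact_mod_cast (by omega : 0 < #W)
  have hη₃ : η ^ 3 * #W ≤ η * #W := by
    gcongr
    exact pow_le_of_le_one hη.le hη₁.le (by norm_num)
  linarith [mul_pos hη hm]

end ApproximateSeinsche

section Peeling

variable {V : Type*} [DecidableEq V] {G : SimpleGraph V}
  {W X S A B C C₁ C₂ T : Finset V} {n ξ η D : ℝ}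

lemma p4Count_mono (h : C ⊆ W) : p4Count G C ≤ p4Count G W := by
  have mono {f g : V → ℝ} (hfg : ∀ a, f a ≤ g a) (hg : ∀ a, 0 ≤ g a) :
      ∑ a ∈ C, f a ≤ ∑ a ∈ W, g a :=
    (sum_le_sum fun a _ => hfg a).trans
      (sum_le_sum_of_subset_of_nonneg h fun a _ _ => hg a)
  exact mono (fun a => mono (fun b => mono (fun c => mono (fun d => le_rfl)
    (p4Indicator_nonneg G a b c)) (p4Count₃_nonneg G W a b)) (p4Count₂_nonneg G W a))
    (p4Count₁_nonneg G W)

/-- Every not too small subset of `W` has a cut that is `η`-sparse in `G` or in its complement;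
`n` stands for the order of magnitude of `W`. -/
def HasCuts (G : SimpleGraph V) (W : Finset V) (n ξ η : ℝ) : Prop :=
  ∀ C ⊆ W, ξ / 5 * n ≤ #C → ∃ C₁ C₂ : Finset V, IsCut C C₁ C₂ ∧
    (crossCount G C₁ C₂ ≤ η * #C₁ * #C₂ ∨ crossCount Gᶜ C₁ C₂ ≤ η * #C₁ * #C₂)

lemma HasCuts.compl (h : HasCuts G W n ξ η) : HasCuts Gᶜ W n ξ η := by
  intro C hC hcard
  obtain ⟨C₁, C₂, hcut, hcross⟩ := h C hC hcard
  exact ⟨C₁, C₂, hcut, by rw [compl_compl]; exact hcross.symm⟩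

lemma hasCuts_of_p4Count_le (hn : 10 ≤ ξ * n) (hη : 0 < η) (hη₁ : η < 1)
    (hcount : p4Count G W ≤ (η ^ 5 / 1000) ^ 4 * (ξ / 5 * n) ^ 4) : HasCuts G W n ξ η := by
  intro C hC hcard
  refine exists_isCut_of_p4Count_le ?_ hη hη₁ ((p4Count_mono hC).trans (hcount.trans ?_))
  · have : (2 : ℝ) ≤ #C := by linarith
    exact_mod_cast this
  · have : 0 ≤ ξ / 5 * n := by linarith
    gcongr

lemma cast_card_union (h : Disjoint A B) : (#(A ∪ B) : ℝ) = #A + #B := by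
  rw [card_union_of_disjoint h, Nat.cast_add]

omit [DecidableEq V] in
lemma cast_card_le_of_subset (hAW : A ⊆ W) (hW : (#W : ℝ) ≤ n) : (#A : ℝ) ≤ n :=
  le_trans (by exact_mod_cast card_le_card hAW) hW

/-- Since the edges across a sparse cut are few, one of its sides inherits the average degree. -/
lemma IsCut.exists_dense_side (h : IsCut C C₁ C₂) (hη : 0 < η)
    (hcross : crossCount G C₁ C₂ ≤ η * #C₁ * #C₂) (hC : (#C : ℝ) ≤ n)
    (havg : D * #C ≤ crossCount G C C) :
    ∃ C₁ C₂ : Finset V, IsCut C C₁ C₂ ∧ crossCount G C₂ C₁ ≤ η * #C₂ * n ∧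
      (D - 2 * η * #C₂) * #C₁ ≤ crossCount G C₁ C₁ := by
  have orient {C₁ C₂ : Finset V} (h : IsCut C C₁ C₂)
      (hcross : crossCount G C₁ C₂ ≤ η * #C₁ * #C₂) : crossCount G C₂ C₁ ≤ η * #C₂ * n :=
    calc crossCount G C₂ C₁ = crossCount G C₁ C₂ := crossCount_comm G _ _
      _ ≤ η * #C₂ * #C₁ := by linarith
      _ ≤ η * #C₂ * n := by gcongr; exact cast_card_le_of_subset h.left_subset hC
  by_contra! hno
  have h₁ := hno C₁ C₂ h (orient h hcross)
  have hcross' : crossCount G C₂ C₁ ≤ η * #C₂ * #C₁ := by rw [crossCount_comm]; linarith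
  have h₂ := hno C₂ C₁ h.symm (orient h.symm hcross')
  have hpos₁ : (0 : ℝ) < #C₁ := by exact_mod_cast h.nonempty_left.card_pos
  have hpos₂ : (0 : ℝ) < #C₂ := by exact_mod_cast h.nonempty_right.card_pos
  rw [← h.union_eq, crossCount_union_self G h.disjoint, cast_card_union h.disjoint] at havg
  nlinarith [mul_pos hη (mul_pos hpos₁ hpos₂)]

lemma IsCut.exists_larger_side (h : IsCut C C₁ C₂) (hη : 0 < η)
    (hcross : crossCount Gᶜ C₁ C₂ ≤ η * #C₁ * #C₂) (hC : (#C : ℝ) ≤ n) (hD : 0 ≤ D)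
    (havg : D * #C ≤ crossCount G C C) :
    ∃ C₁ C₂ : Finset V, IsCut C C₁ C₂ ∧ #C₂ ≤ #C₁ ∧ crossCount Gᶜ C₂ C₁ ≤ η * #C₂ * n ∧
      (D - 3 * #C₂) * #C₁ ≤ crossCount G C₁ C₁ := by
  wlog hle : #C₂ ≤ #C₁ generalizing C₁ C₂
  · exact this h.symm (by rw [crossCount_comm]; linarith) (by omega)
  refine ⟨C₁, C₂, h, hle, ?_, ?_⟩
  · rw [crossCount_comm]
    calc crossCount Gᶜ C₁ C₂ ≤ η * #C₂ * #C₁ := by linarith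
      _ ≤ η * #C₂ * n := by gcongr; exact cast_card_le_of_subset h.left_subset hC
  · have hle' : (#C₂ : ℝ) ≤ #C₁ := by exact_mod_cast hle
    rw [← h.union_eq, crossCount_union_self G h.disjoint, cast_card_union h.disjoint] at havg
    nlinarith [crossCount_le_card_mul_card G C₁ C₂, crossCount_le_card_mul_card G C₂ C₂,
      mul_nonneg hD (#C₂).cast_nonneg]

/-- A stage of the decomposition of `W`. Cuts are split off the current core `C`: sides that are
almost joined to the rest of the core are collected in `A`, sides that are almost detached from it
in `B`. From time to time `A` and `B` are emptied, `B` into `X` and `A` into the waste `S`. -/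
structure Peeling (G : SimpleGraph V) (W : Finset V) (n η : ℝ) (X S A B C : Finset V) : Prop where
  union_eq : X ∪ S ∪ A ∪ B ∪ C = W
  disjoint_X_S : Disjoint X S
  disjoint_XS_A : Disjoint (X ∪ S) A
  disjoint_XSA_B : Disjoint (X ∪ S ∪ A) B
  disjoint_XSAB_C : Disjoint (X ∪ S ∪ A ∪ B) C
  crossCount_X_le : crossCount G X (A ∪ B ∪ C) ≤ η * #X * n
  crossCount_compl_A_le : crossCount Gᶜ A C ≤ η * #A * n
  crossCount_B_le : crossCount G B C ≤ η * #B * n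

namespace Peeling

lemma initial : Peeling G W n η ∅ ∅ ∅ ∅ W := by
  constructor <;> simp [crossCount]

lemma symm (h : Peeling G W n η ∅ ∅ A B C) : Peeling Gᶜ W n η ∅ ∅ B A C where
  union_eq := by have := h.union_eq; grind
  disjoint_X_S := disjoint_empty_right _
  disjoint_XS_A := by simp
  disjoint_XSA_B := by simpa using h.disjoint_XSA_B.symm
  disjoint_XSAB_C := by simpa [and_comm] using h.disjoint_XSAB_C
  crossCount_X_le := by simp [crossCount]
  crossCount_compl_A_le := by rw [compl_compl]; exact h.crossCount_B_le
  crossCount_B_le := h.crossCount_compl_A_le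

lemma sparse_move (h : Peeling G W n η X S A B C) (hcut : IsCut C C₁ C₂)
    (hcross : crossCount G C₂ C₁ ≤ η * #C₂ * n) : Peeling G W n η X S A (B ∪ C₂) C₁ := by
  obtain ⟨hunion, hXS, hA, hB, hC, hX, hAC, hBC⟩ := h
  obtain ⟨hdisj, rfl, -, -⟩ := hcut
  have := hdisj.symm
  simp only [disjoint_union_left, disjoint_union_right] at hA hB hC
  have hBC₂ : Disjoint B C₂ := hC.2.2
  refine ⟨by grind, hXS, ?_, ?_, ?_, (congrArg (crossCount G X) (by grind)).trans_le hX,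
    (crossCount_mono Gᶜ subset_rfl subset_union_left).trans hAC, ?_⟩
  iterate 3 simp only [disjoint_union_left, disjoint_union_right]; tauto
  rw [crossCount_union_left G hBC₂, cast_card_union hBC₂]
  linarith [crossCount_mono G (subset_refl B) (subset_union_left (s₁ := C₁) (s₂ := C₂))]

lemma dense_move (h : Peeling G W n η X S A B C) (hcut : IsCut C C₁ C₂)
    (hcross : crossCount Gᶜ C₂ C₁ ≤ η * #C₂ * n) : Peeling G W n η X S (A ∪ C₂) B C₁ := by
  obtain ⟨hunion, hXS, hA, hB, hC, hX, hAC, hBC⟩ := h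
  obtain ⟨hdisj, rfl, -, -⟩ := hcut
  have := hdisj.symm
  simp only [disjoint_union_left, disjoint_union_right] at hA hB hC
  have hAC₂ : Disjoint A C₂ := hC.2.1.2
  have := hC.2.2.symm
  refine ⟨by grind, hXS, ?_, ?_, ?_, (congrArg (crossCount G X) (by grind)).trans_le hX, ?_,
    (crossCount_mono G subset_rfl subset_union_left).trans hBC⟩
  iterate 3 simp only [disjoint_union_left, disjoint_union_right]; tauto
  rw [crossCount_union_left Gᶜ hAC₂, cast_card_union hAC₂]
  linarith [crossCount_mono Gᶜ (subset_refl A) (subset_union_left (s₁ := C₁) (s₂ := C₂))]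

lemma disjoint_X_B (h : Peeling G W n η X S A B C) : Disjoint X B :=
  h.disjoint_XSA_B.mono_left (subset_union_left.trans subset_union_left)

lemma disjoint_S_A (h : Peeling G W n η X S A B C) : Disjoint S A :=
  h.disjoint_XS_A.mono_left subset_union_right

lemma absorb (h : Peeling G W n η X S A B C) : Peeling G W n η (X ∪ B) (S ∪ A) ∅ ∅ C := by
  have hXB := h.disjoint_X_B
  obtain ⟨hunion, hXS, hA, hB, hC, hX, -, hBC⟩ := h
  simp only [disjoint_union_left] at hA hB hC
  have := hB.1.2.symm
  have := hB.2.symm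
  refine ⟨by grind, ?_, disjoint_empty_right _, disjoint_empty_right _, ?_, ?_,
    by simp [crossCount], by simp [crossCount]⟩
  iterate 2 simp only [disjoint_union_left, disjoint_union_right, disjoint_empty_left]; tauto
  rw [empty_union, empty_union, crossCount_union_left G hXB, cast_card_union hXB]
  linarith [crossCount_mono G (subset_refl X) (subset_union_right (s₁ := A ∪ B) (s₂ := C))]

lemma core_subset (h : Peeling G W n η X S A B C) : C ⊆ W :=
  h.union_eq ▸ subset_union_right

lemma X_subset (h : Peeling G W n η X S A B C) : X ⊆ W :=
  h.union_eq ▸ by grind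

lemma disjoint_X_rest (h : Peeling G W n η X S A B C) : Disjoint X (A ∪ B ∪ C) := by
  simp only [disjoint_union_right]
  exact ⟨⟨h.disjoint_XS_A.mono_left subset_union_left, h.disjoint_X_B⟩,
    h.disjoint_XSAB_C.mono_left (by grind)⟩

lemma disjoint_X_C (h : Peeling G W n η X S A B C) : Disjoint X C :=
  h.disjoint_X_rest.mono_right subset_union_right

lemma card_X_add_card_B_le (h : Peeling G W n η X S A B C) (hW : (#W : ℝ) ≤ n) :
    (#X + #B : ℝ) ≤ n := by
  rw [← cast_card_union h.disjoint_X_B]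
  exact cast_card_le_of_subset (h.union_eq ▸ by grind) hW

lemma crossCount_X_le_of_subset (h : Peeling G W n η X S A B C) (hη : 0 ≤ η)
    (hW : (#W : ℝ) ≤ n) (hT : T ⊆ A ∪ B ∪ C) : crossCount G X T ≤ η * n ^ 2 := by
  have hX : (#X : ℝ) ≤ n := by linarith [h.card_X_add_card_B_le hW, (#B).cast_nonneg (α := ℝ)]
  have hn : 0 ≤ n := (#X).cast_nonneg.trans hX
  calc crossCount G X T ≤ crossCount G X (A ∪ B ∪ C) := crossCount_mono G subset_rfl hT
    _ ≤ η * #X * n := h.crossCount_X_le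
    _ ≤ η * n * n := by gcongr
    _ = η * n ^ 2 := by ring

end Peeling

end Peeling

section Decomposition

variable {V : Type*} [DecidableEq V] {G : SimpleGraph V}
  {W X S A B C C₁ C₂ : Finset V} {n ξ η : ℝ}

/-- A large set `Z` that is almost detached from `X` and almost joined to `Y`, where `X` and `Y`
are almost detached from each other. -/
structure IsWitness (G : SimpleGraph V) (W : Finset V) (n κ η : ℝ) (X Y Z : Finset V) : Prop where
  subset : Z ⊆ W
  disjoint_left : Disjoint X Z
  disjoint_right : Disjoint Y Z
  le_card : κ * n ≤ #Z
  crossCount_left_right_le : crossCount G X Y ≤ η * n ^ 2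
  crossCount_left_le : crossCount G X Z ≤ η * n ^ 2
  crossCount_compl_right_le : crossCount Gᶜ Y Z ≤ η * n ^ 2

/-- Two large disjoint sets `X` and `Y = Y₁ ∪ Y₂` covering most of `W`, such that `Y₁` and `Y₂` are
almost joined to each other and each of them, together with `X`, has a witness. -/
structure IsDecomposition (G : SimpleGraph V) (W : Finset V) (n ξ η : ℝ)
    (X Y₁ Y₂ Z₁ Z₂ : Finset V) : Prop where
  left_subset : X ⊆ W
  right_subset : Y₁ ∪ Y₂ ⊆ W
  disjoint : Disjoint X (Y₁ ∪ Y₂)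
  disjoint_parts : Disjoint Y₁ Y₂
  crossCount_compl_parts_le : crossCount Gᶜ Y₁ Y₂ ≤ η * n ^ 2
  witness₁ : IsWitness G W n (ξ ^ 2 / 4000) η X Y₁ Z₁
  witness₂ : IsWitness G W n (ξ ^ 2 / 4000) η X Y₂ Z₂
  le_card_left : ξ / 10 * n ≤ #X
  le_card_right : ξ / 10 * n ≤ #(Y₁ ∪ Y₂)
  card_sdiff_le : (#(W \ (X ∪ (Y₁ ∪ Y₂))) : ℝ) ≤ 2 / 5 * ξ * n

/-- The regime of a peeling in which `X` is already large. The set `A` stays tiny, and the average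
degree inside the core only drops in proportion to what has been removed. -/
structure LatePeeling (G : SimpleGraph V) (W : Finset V) (n ξ η : ℝ) (X S A B C : Finset V) : Prop
    extends Peeling G W n η X S A B C where
  nonempty : C.Nonempty
  le_card_X : ξ / 10 * n ≤ #X
  card_S_le : #S ≤ ξ / 10 * n + ξ / 200 * #X
  card_A_lt : #A < ξ ^ 2 / 4000 * n
  card_B_lt : #B < ξ / 20 * n
  avg_le : (0.55 * ξ * n - 3 * (#S + #A) - 2 * η * (#X + #B)) * #C ≤ crossCount G C C

namespace LatePeeling

lemma card_waste_le (h : LatePeeling G W n ξ η X S A B C) (hξ : 0 < ξ) (hW : (#W : ℝ) ≤ n) :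
    #S ≤ 21 / 200 * ξ * n := by
  have hX := h.card_X_add_card_B_le hW
  have hX' : (#X : ℝ) ≤ n := by linarith [(#B).cast_nonneg (α := ℝ)]
  have : ξ / 200 * #X ≤ ξ / 200 * n := by gcongr
  linarith [h.card_S_le]

lemma card_A_le (h : LatePeeling G W n ξ η X S A B C) (hξ : 0 < ξ) (hξ₁ : ξ < 1) (hn : 0 < n) :
    #A ≤ ξ / 4000 * n :=
  calc (#A : ℝ) ≤ ξ ^ 2 / 4000 * n := h.card_A_lt.le
    _ ≤ ξ / 4000 * n := by gcongr; nlinarith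

lemma le_avg (h : LatePeeling G W n ξ η X S A B C) (hn : 0 < n) (hξ : 0 < ξ) (hξ₁ : ξ < 1)
    (hηξ : η ≤ ξ / 100) (hW : (#W : ℝ) ≤ n) :
    ξ / 5 * n ≤ 0.55 * ξ * n - 3 * (#S + #A) - 2 * η * (#X + #B) := by
  have hXB : η * (#X + #B) ≤ ξ / 100 * n := by
    gcongr
    exact h.card_X_add_card_B_le hW
  linarith [h.card_waste_le hξ hW, h.card_A_le hξ hξ₁ hn, mul_pos hξ hn]

lemma le_card_core (h : LatePeeling G W n ξ η X S A B C) (hn : 0 < n) (hξ : 0 < ξ) (hξ₁ : ξ < 1)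
    (hηξ : η ≤ ξ / 100) (hW : (#W : ℝ) ≤ n) : ξ / 5 * n ≤ #C :=
  (h.le_avg hn hξ hξ₁ hηξ hW).trans <|
    le_of_mul_le_mul_right (h.avg_le.trans (crossCount_le_card_mul_card G C C))
      (by exact_mod_cast h.nonempty.card_pos)

lemma exists_of_sparse_cut (h : LatePeeling G W n ξ η X S A B C) (hn : 0 < n) (hξ : 0 < ξ)
    (hcut : IsCut C C₁ C₂) (hcross : crossCount G C₂ C₁ ≤ η * #C₂ * n)
    (havg : (0.55 * ξ * n - 3 * (#S + #A) - 2 * η * (#X + #B) - 2 * η * #C₂) * #C₁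
      ≤ crossCount G C₁ C₁) :
    ∃ X S A B, LatePeeling G W n ξ η X S A B C₁ := by
  have hmove := h.sparse_move hcut hcross
  have hBC₂ : (#(B ∪ C₂) : ℝ) = #B + #C₂ :=
    cast_card_union (h.disjoint_XSAB_C.mono subset_union_right hcut.right_subset)
  by_cases hsmall : #(B ∪ C₂) < ξ / 20 * n
  · refine ⟨X, S, A, B ∪ C₂, hmove, hcut.nonempty_left, h.le_card_X, h.card_S_le, h.card_A_lt,
      hsmall, le_trans (le_of_eq ?_) havg⟩
    rw [hBC₂]
    ring
  · have hX : (#(X ∪ (B ∪ C₂)) : ℝ) = #X + (#B + #C₂) := by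
      rw [cast_card_union hmove.disjoint_X_B, hBC₂]
    have hS : (#(S ∪ A) : ℝ) = #S + #A := cast_card_union h.disjoint_S_A
    rw [not_lt, hBC₂] at hsmall
    have hA : ξ ^ 2 / 4000 * n ≤ ξ / 200 * (#B + #C₂) :=
      calc ξ ^ 2 / 4000 * n = ξ / 200 * (ξ / 20 * n) := by ring
        _ ≤ ξ / 200 * (#B + #C₂) := by gcongr
    refine ⟨X ∪ (B ∪ C₂), S ∪ A, ∅, ∅, hmove.absorb, hcut.nonempty_left, ?_, ?_, ?_, ?_,
      le_trans (le_of_eq ?_) havg⟩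
    · rw [hX]
      linarith [h.le_card_X, mul_pos hξ hn]
    · rw [hX, hS]
      linarith [h.card_S_le, h.card_A_lt]
    · rw [card_empty, Nat.cast_zero]
      positivity
    · rw [card_empty, Nat.cast_zero]
      positivity
    · rw [hX, hS, card_empty, Nat.cast_zero]
      ring

lemma of_dense_cut (h : LatePeeling G W n ξ η X S A B C) (hcut : IsCut C C₁ C₂)
    (hcross : crossCount Gᶜ C₂ C₁ ≤ η * #C₂ * n) (hsmall : #(A ∪ C₂) < ξ ^ 2 / 4000 * n)
    (havg : (0.55 * ξ * n - 3 * (#S + #A) - 2 * η * (#X + #B) - 3 * #C₂) * #C₁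
      ≤ crossCount G C₁ C₁) :
    LatePeeling G W n ξ η X S (A ∪ C₂) B C₁ := by
  have hAC₂ : (#(A ∪ C₂) : ℝ) = #A + #C₂ :=
    cast_card_union (h.disjoint_XSAB_C.mono (by grind) hcut.right_subset)
  refine ⟨h.dense_move hcut hcross, hcut.nonempty_left, h.le_card_X, h.card_S_le, hsmall,
    h.card_B_lt, le_trans (le_of_eq ?_) havg⟩
  rw [hAC₂]
  ring

end LatePeeling

lemma Peeling.isWitness (h : Peeling G W n η X S A B C) (hη : 0 ≤ η) (hW : (#W : ℝ) ≤ n)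
    {κ : ℝ} {Y Z : Finset V} (hY : Y ⊆ A ∪ B ∪ C) (hZ : Z ⊆ A ∪ B ∪ C) (hYZ : Disjoint Y Z)
    (hcard : κ * n ≤ #Z) (hcross : crossCount Gᶜ Y Z ≤ η * n ^ 2) :
    IsWitness G W n κ η X Y Z where
  subset := hZ.trans (h.union_eq ▸ by grind)
  disjoint_left := h.disjoint_X_rest.mono_right hZ
  disjoint_right := hYZ
  le_card := hcard
  crossCount_left_right_le := h.crossCount_X_le_of_subset hη hW hY
  crossCount_left_le := h.crossCount_X_le_of_subset hη hW hZ
  crossCount_compl_right_le := hcross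

lemma Peeling.crossCount_compl_core_le (h : Peeling G W n η X S A B C) (hη : 0 ≤ η)
    (hW : (#W : ℝ) ≤ n) : crossCount Gᶜ C A ≤ η * n ^ 2 := by
  have hA : (#A : ℝ) ≤ n := cast_card_le_of_subset (h.union_eq ▸ by grind) hW
  have hn : 0 ≤ n := (Nat.cast_nonneg _).trans hA
  calc crossCount Gᶜ C A = crossCount Gᶜ A C := crossCount_comm _ _ _
    _ ≤ η * #A * n := h.crossCount_compl_A_le
    _ ≤ η * n * n := by gcongr
    _ = η * n ^ 2 := by ring

namespace LatePeeling

lemma isDecomposition_of_large_side (h : LatePeeling G W n ξ η X S A B C) (hn : 0 < n)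
    (hξ : 0 < ξ) (hξ₁ : ξ < 1) (hη : 0 < η) (hηξ : η ≤ ξ / 100) (hW : (#W : ℝ) ≤ n)
    (hcut : IsCut C C₁ C₂) (hle : #C₂ ≤ #C₁) (hcross : crossCount Gᶜ C₂ C₁ ≤ η * #C₂ * n)
    (hlarge : ξ ^ 2 / 4000 * n ≤ #C₂) : IsDecomposition G W n ξ η X C₁ C₂ C₂ C₁ := by
  have hC := h.le_card_core hn hξ hξ₁ hηξ hW
  have hle' : (#C₂ : ℝ) ≤ #C₁ := by exact_mod_cast hle
  have hcross₂₁ : crossCount Gᶜ C₂ C₁ ≤ η * n ^ 2 :=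
    calc crossCount Gᶜ C₂ C₁ ≤ η * #C₂ * n := hcross
      _ ≤ η * n * n := by
        gcongr
        exact cast_card_le_of_subset (hcut.right_subset.trans h.core_subset) hW
      _ = η * n ^ 2 := by ring
  have hcross₁₂ : crossCount Gᶜ C₁ C₂ ≤ η * n ^ 2 := by rwa [crossCount_comm]
  have hC₁ : C₁ ⊆ A ∪ B ∪ C := hcut.left_subset.trans subset_union_right
  have hC₂ : C₂ ⊆ A ∪ B ∪ C := hcut.right_subset.trans subset_union_right
  refine ⟨h.X_subset, hcut.union_eq ▸ h.core_subset, hcut.union_eq ▸ h.disjoint_X_C,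
    hcut.disjoint, hcross₁₂, h.isWitness hη.le hW hC₁ hC₂ hcut.disjoint hlarge hcross₁₂,
    h.isWitness hη.le hW hC₂ hC₁ hcut.disjoint.symm (hlarge.trans hle') hcross₂₁,
    h.le_card_X, ?_, ?_⟩
  · rw [hcut.union_eq]
    linarith [mul_pos hξ hn]
  · rw [hcut.union_eq]
    have hsub : W \ (X ∪ C) ⊆ S ∪ A ∪ B := by
      intro x
      rw [← h.union_eq]
      simp only [mem_sdiff, mem_union]
      tauto
    have := cast_card_le_of_subset hsub (cast_card_union_le₃ S A B)
    linarith [h.card_waste_le hξ hW, h.card_A_le hξ hξ₁ hn, h.card_B_lt, mul_pos hξ hn]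

lemma isDecomposition_of_small_side (h : LatePeeling G W n ξ η X S A B C) (hn : 0 < n)
    (hξ : 0 < ξ) (hξ₁ : ξ < 1) (hη : 0 < η) (hηξ : η ≤ ξ / 100) (hW : (#W : ℝ) ≤ n)
    (hcut : IsCut C C₁ C₂) (hle : #C₂ ≤ #C₁) (hcross : crossCount Gᶜ C₂ C₁ ≤ η * #C₂ * n)
    (hlarge : ξ ^ 2 / 4000 * n ≤ #(A ∪ C₂)) (hsmall : #C₂ < ξ ^ 2 / 4000 * n) :
    IsDecomposition G W n ξ η X C₁ ∅ (A ∪ C₂) (A ∪ C₂) := by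
  have hC := h.le_card_core hn hξ hξ₁ hηξ hW
  have hle' : (#C₂ : ℝ) ≤ #C₁ := by exact_mod_cast hle
  have hcard : (#C₁ + #C₂ : ℝ) = #C := by exact_mod_cast hcut.card_add_card
  have hmove := h.dense_move hcut hcross
  have hcross₁ := hmove.crossCount_compl_core_le hη.le hW
  have hcross₀ (T : Finset V) : crossCount Gᶜ ∅ T ≤ η * n ^ 2 := by
    rw [crossCount, sum_empty]
    positivity
  have hA : A ∪ C₂ ⊆ A ∪ C₂ ∪ B ∪ C₁ := by grind
  have hdisj : Disjoint C₁ (A ∪ C₂) := (hmove.disjoint_XSAB_C.mono_left (by grind)).symm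
  refine ⟨h.X_subset, ?_, ?_, disjoint_empty_right _, ?_,
    hmove.isWitness hη.le hW subset_union_right hA hdisj hlarge hcross₁,
    hmove.isWitness hη.le hW (empty_subset _) hA (disjoint_empty_left _) hlarge (hcross₀ _),
    h.le_card_X, ?_, ?_⟩
  · rw [union_empty]
    exact hmove.core_subset
  · rw [union_empty]
    exact hmove.disjoint_X_C
  · rw [crossCount_comm]
    exact hcross₀ C₁
  · rw [union_empty]
    linarith
  · have hsub : W \ (X ∪ (C₁ ∪ ∅)) ⊆ S ∪ A ∪ (B ∪ C₂) := by
      intro x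
      rw [← hmove.union_eq, union_empty]
      simp only [mem_sdiff, mem_union]
      tauto
    have hBC₂ : (#(B ∪ C₂) : ℝ) ≤ #B + #C₂ := by exact_mod_cast card_union_le B C₂
    have := cast_card_le_of_subset hsub (cast_card_union_le₃ S A (B ∪ C₂))
    have : ξ ^ 2 / 4000 * n ≤ ξ / 4000 * n := by gcongr; nlinarith
    linarith [h.card_waste_le hξ hW, h.card_A_le hξ hξ₁ hn, h.card_B_lt, mul_pos hξ hn]

end LatePeeling

end Decomposition

section DecompositionExistence

variable {V : Type*} [DecidableEq V] {G : SimpleGraph V}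
  {W X S A B C C₁ C₂ : Finset V} {n ξ η : ℝ}

lemma IsCut.card_left_lt (h : IsCut C C₁ C₂) : #C₁ < #C := by
  have := h.card_add_card
  have := h.nonempty_right.card_pos
  omega

namespace LatePeeling

lemma exists_isDecomposition_or_smaller (h : LatePeeling G W n ξ η X S A B C) (hn : 0 < n)
    (hξ : 0 < ξ) (hξ₁ : ξ < 1) (hη : 0 < η) (hηξ : η ≤ ξ / 100) (hW : (#W : ℝ) ≤ n)
    (hcuts : HasCuts G W n ξ η) :
    (∃ X Y₁ Y₂ Z₁ Z₂, IsDecomposition G W n ξ η X Y₁ Y₂ Z₁ Z₂) ∨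
      ∃ X S A B C', LatePeeling G W n ξ η X S A B C' ∧ #C' < #C := by
  have hC : (#C : ℝ) ≤ n := cast_card_le_of_subset h.core_subset hW
  obtain ⟨C₁, C₂, hcut, hcross | hcross⟩ :=
    hcuts C h.core_subset (h.le_card_core hn hξ hξ₁ hηξ hW)
  · obtain ⟨C₁, C₂, hcut, hcross, havg⟩ := hcut.exists_dense_side hη hcross hC h.avg_le
    obtain ⟨X, S, A, B, h'⟩ := h.exists_of_sparse_cut hn hξ hcut hcross havg
    exact Or.inr ⟨X, S, A, B, C₁, h', hcut.card_left_lt⟩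
  · have hD := (by positivity : 0 ≤ ξ / 5 * n).trans (h.le_avg hn hξ hξ₁ hηξ hW)
    obtain ⟨C₁, C₂, hcut, hle, hcross, havg⟩ := hcut.exists_larger_side hη hcross hC hD h.avg_le
    by_cases hAC₂ : #(A ∪ C₂) < ξ ^ 2 / 4000 * n
    · exact Or.inr ⟨X, S, A ∪ C₂, B, C₁, h.of_dense_cut hcut hcross hAC₂ havg, hcut.card_left_lt⟩
    by_cases hC₂ : #C₂ < ξ ^ 2 / 4000 * n
    · exact Or.inl ⟨_, _, _, _, _, h.isDecomposition_of_small_side hn hξ hξ₁ hη hηξ hW hcut hle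
        hcross (not_lt.1 hAC₂) hC₂⟩
    · exact Or.inl ⟨_, _, _, _, _, h.isDecomposition_of_large_side hn hξ hξ₁ hη hηξ hW hcut hle
        hcross (not_lt.1 hC₂)⟩

lemma exists_isDecomposition (h : LatePeeling G W n ξ η X S A B C) (hn : 0 < n)
    (hξ : 0 < ξ) (hξ₁ : ξ < 1) (hη : 0 < η) (hηξ : η ≤ ξ / 100) (hW : (#W : ℝ) ≤ n)
    (hcuts : HasCuts G W n ξ η) :
    ∃ X Y₁ Y₂ Z₁ Z₂, IsDecomposition G W n ξ η X Y₁ Y₂ Z₁ Z₂ := by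
  induction hk : #C using Nat.strong_induction_on generalizing X S A B C with
  | _ k ih =>
    obtain hdec | ⟨X, S, A, B, C', h', hlt⟩ :=
      h.exists_isDecomposition_or_smaller hn hξ hξ₁ hη hηξ hW hcuts
    · exact hdec
    · exact ih _ (hk ▸ hlt) h' rfl

end LatePeeling

/-- The initial regime of a peeling, symmetric under complementation: both sides are small and
nothing has been moved to `X` or to the waste. -/
structure EarlyPeeling (G : SimpleGraph V) (W : Finset V) (n ξ η : ℝ) (A B C : Finset V) : Prop
    extends Peeling G W n η ∅ ∅ A B C where
  card_A_lt : #A < ξ / 10 * n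
  card_B_lt : #B < ξ / 10 * n

namespace EarlyPeeling

lemma symm (h : EarlyPeeling G W n ξ η A B C) : EarlyPeeling Gᶜ W n ξ η B A C :=
  ⟨h.toPeeling.symm, h.card_B_lt, h.card_A_lt⟩

lemma disjoint_sides_core (h : EarlyPeeling G W n ξ η A B C) : Disjoint (A ∪ B) C :=
  h.disjoint_XSAB_C.mono_left (by grind)

lemma sides_union_core (h : EarlyPeeling G W n ξ η A B C) : A ∪ B ∪ C = W := by
  rw [← h.union_eq, empty_union, empty_union]

lemma card_sides_lt (h : EarlyPeeling G W n ξ η A B C) : #(A ∪ B) < ξ / 5 * n := by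
  have : (#(A ∪ B) : ℝ) ≤ #A + #B := by exact_mod_cast card_union_le A B
  linarith [h.card_A_lt, h.card_B_lt]

lemma card_sides_add_card_core (h : EarlyPeeling G W n ξ η A B C) :
    (#(A ∪ B) + #C : ℝ) = #W := by
  rw [← h.sides_union_core, cast_card_union h.disjoint_sides_core]

lemma le_card_core (h : EarlyPeeling G W n ξ η A B C) (hn : 0 < n) (hξ₁ : ξ < 1)
    (hW : 1 / 2 * n ≤ #W) : ξ / 5 * n ≤ #C := by
  have : ξ * n ≤ 1 * n := by gcongr
  linarith [h.card_sides_lt, h.card_sides_add_card_core]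

lemma avg_le (h : EarlyPeeling G W n ξ η A B C) (hn : 0 < n) (hξ : 0 < ξ) (hW : (#W : ℝ) ≤ n)
    (hG : 0.95 * ξ * n ^ 2 ≤ crossCount G W W) : 0.55 * ξ * n * #C ≤ crossCount G C C := by
  set R := A ∪ B with hR
  have hcard : (#R + #C : ℝ) = #W := h.card_sides_add_card_core
  rw [← h.sides_union_core, crossCount_union_self G h.disjoint_sides_core, ← hR] at hG
  have hRR := crossCount_le_card_mul_card G R R
  have hRC := crossCount_le_card_mul_card G R C
  have hR_nonneg : (0 : ℝ) ≤ #R := (#R).cast_nonneg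
  have hRn : (#R : ℝ) * n ≤ ξ / 5 * n * n := by gcongr; exact h.card_sides_lt.le
  have hRW : (#R : ℝ) * (#R + #C) ≤ #R * n := by gcongr; exact hcard.trans_le hW
  have hCn : 0.55 * ξ * n * #C ≤ 0.55 * ξ * n * n := by gcongr; linarith
  nlinarith

lemma exists_of_sparse_cut (h : EarlyPeeling G W n ξ η A B C) (hn : 0 < n) (hξ : 0 < ξ)
    (hη : 0 < η) (hcut : IsCut C C₁ C₂) (hcross : crossCount G C₂ C₁ ≤ η * #C₂ * n)
    (havg : (0.55 * ξ * n - 2 * η * #C₂) * #C₁ ≤ crossCount G C₁ C₁) :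
    (∃ A B, EarlyPeeling G W n ξ η A B C₁) ∨ ∃ X S A B, LatePeeling G W n ξ η X S A B C₁ := by
  have hmove := h.sparse_move hcut hcross
  by_cases hsmall : #(B ∪ C₂) < ξ / 10 * n
  · exact Or.inl ⟨A, B ∪ C₂, hmove, h.card_A_lt, hsmall⟩
  · have hBC₂ : (#(B ∪ C₂) : ℝ) = #B + #C₂ :=
      cast_card_union (h.disjoint_XSAB_C.mono subset_union_right hcut.right_subset)
    refine Or.inr ⟨_, _, _, _, hmove.absorb, hcut.nonempty_left, ?_, ?_, ?_, ?_, ?_⟩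
    · rw [empty_union]
      exact not_lt.1 hsmall
    · rw [empty_union, empty_union]
      have : 0 ≤ ξ / 200 * (#(B ∪ C₂) : ℝ) := by positivity
      linarith [h.card_A_lt]
    · rw [card_empty, Nat.cast_zero]
      positivity
    · rw [card_empty, Nat.cast_zero]
      positivity
    · refine le_trans ?_ havg
      rw [empty_union, empty_union, card_empty, Nat.cast_zero, hBC₂]
      have : 0 ≤ η * (#B : ℝ) := by positivity
      gcongr ?_ * _
      linarith [(#A).cast_nonneg (α := ℝ)]

lemma exists_of_sparse (h : EarlyPeeling G W n ξ η A B C) (hn : 0 < n) (hξ : 0 < ξ)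
    (hη : 0 < η) (hW : (#W : ℝ) ≤ n) (hG : 0.95 * ξ * n ^ 2 ≤ crossCount G W W)
    (hcut : IsCut C C₁ C₂) (hcross : crossCount G C₁ C₂ ≤ η * #C₁ * #C₂) :
    (∃ A B C', EarlyPeeling G W n ξ η A B C' ∧ #C' < #C) ∨
      ∃ X S A B C', LatePeeling G W n ξ η X S A B C' := by
  obtain ⟨C₁, C₂, hcut, hcross, havg⟩ := hcut.exists_dense_side hη hcross
    (cast_card_le_of_subset h.core_subset hW) (h.avg_le hn hξ hW hG)
  obtain ⟨A, B, h'⟩ | ⟨X, S, A, B, h'⟩ := h.exists_of_sparse_cut hn hξ hη hcut hcross havg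
  · exact Or.inl ⟨A, B, C₁, h', hcut.card_left_lt⟩
  · exact Or.inr ⟨X, S, A, B, C₁, h'⟩

lemma exists_latePeeling (h : EarlyPeeling G W n ξ η A B C) (hn : 0 < n) (hξ : 0 < ξ)
    (hξ₁ : ξ < 1) (hη : 0 < η) (hW : (#W : ℝ) ≤ n) (hW' : 1 / 2 * n ≤ #W)
    (hG : 0.95 * ξ * n ^ 2 ≤ crossCount G W W) (hG' : 0.95 * ξ * n ^ 2 ≤ crossCount Gᶜ W W)
    (hcuts : HasCuts G W n ξ η) :
    (∃ X S A B C, LatePeeling G W n ξ η X S A B C) ∨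
      ∃ X S A B C, LatePeeling Gᶜ W n ξ η X S A B C := by
  induction hk : #C using Nat.strong_induction_on generalizing A B C with
  | _ k ih =>
    obtain ⟨C₁, C₂, hcut, hcross | hcross⟩ :=
      hcuts C h.core_subset (h.le_card_core hn hξ₁ hW')
    · obtain ⟨A, B, C', h', hlt⟩ | hlate := h.exists_of_sparse hn hξ hη hW hG hcut hcross
      · exact ih _ (hk ▸ hlt) h' rfl
      · exact Or.inl hlate
    · obtain ⟨A, B, C', h', hlt⟩ | hlate := h.symm.exists_of_sparse hn hξ hη hW hG' hcut hcross
      · exact ih _ (hk ▸ hlt) (compl_compl G ▸ h'.symm) rfl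
      · exact Or.inr hlate

end EarlyPeeling

theorem exists_isDecomposition_or_compl (hn : 100 ≤ ξ * n) (hξ : 0 < ξ) (hξ₁ : ξ < 1)
    (hη : 0 < η) (hηξ : η ≤ ξ / 100) (hW : (#W : ℝ) ≤ n) (hW' : 1 / 2 * n ≤ #W)
    (hG : 0.95 * ξ * n ^ 2 ≤ crossCount G W W) (hG' : 0.95 * ξ * n ^ 2 ≤ crossCount Gᶜ W W)
    (hcount : p4Count G W ≤ (η ^ 5 / 1000) ^ 4 * (ξ / 5 * n) ^ 4) :
    (∃ X Y₁ Y₂ Z₁ Z₂, IsDecomposition G W n ξ η X Y₁ Y₂ Z₁ Z₂) ∨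
      ∃ X Y₁ Y₂ Z₁ Z₂, IsDecomposition Gᶜ W n ξ η X Y₁ Y₂ Z₁ Z₂ := by
  have hn₀ : 0 < n := pos_of_mul_pos_right (by linarith) hξ.le
  have hcuts : HasCuts G W n ξ η :=
    hasCuts_of_p4Count_le (by linarith) hη (by linarith) hcount
  have hstart : EarlyPeeling G W n ξ η ∅ ∅ W := by
    refine ⟨.initial, ?_, ?_⟩ <;> rw [card_empty, Nat.cast_zero] <;> positivity
  obtain ⟨X, S, A, B, C, h⟩ | ⟨X, S, A, B, C, h⟩ :=
    hstart.exists_latePeeling hn₀ hξ hξ₁ hη hW hW' hG hG' hcuts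
  · exact Or.inl (h.exists_isDecomposition hn₀ hξ hξ₁ hη hηξ hW hcuts)
  · exact Or.inr (h.exists_isDecomposition hn₀ hξ hξ₁ hη hηξ hW hcuts.compl)

end DecompositionExistence

section InducedD2

variable {V : Type*} [DecidableEq V] {E : Finset (Finset V)} {S T W : Finset V} {v a b c d : V}

/-- The set `S` induces a copy of `D₂`. -/
def IsD2 (E : Finset (Finset V)) (S : Finset V) : Prop :=
  #S = 4 ∧ #{e ∈ E | e ⊆ S} = 2

lemma card_filter_subset_eq_card_filter_erase (hE : ∀ e ∈ E, #e = 3) (hS : #S = 4) :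
    #{e ∈ E | e ⊆ S} = #{x ∈ S | S.erase x ∈ E} := by
  symm
  refine card_nbij S.erase (fun x hx => ?_)
    ((erase_injOn S).mono (coe_subset.2 (filter_subset _ S))) fun e he => ?_
  · exact mem_filter.2 ⟨(mem_filter.1 hx).2, erase_subset x S⟩
  · obtain ⟨heE, heS⟩ := mem_filter.1 he
    obtain ⟨x, hx, rfl⟩ := exists_eq_insert_iff.2 ⟨heS, by rw [hE e heE, hS]⟩
    exact ⟨x, by simp [hx, heE], erase_insert hx⟩

lemma isD2_iff (hE : ∀ e ∈ E, #e = 3) (h : [a, b, c, d].Nodup) :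
    IsD2 E {a, b, c, d} ↔ (if {b, c, d} ∈ E then 1 else 0) + (if {a, c, d} ∈ E then 1 else 0)
      + (if {a, b, d} ∈ E then 1 else 0) + (if {a, b, c} ∈ E then 1 else 0) = 2 := by
  simp only [List.nodup_cons, List.mem_cons, List.not_mem_nil, not_or, or_false] at h
  obtain ⟨⟨hab, hac, had⟩, ⟨hbc, hbd⟩, hcd, -⟩ := h
  have hcard : #{a, b, c, d} = 4 := by simp [*]
  have ha : ({a, b, c, d} : Finset V).erase a = {b, c, d} := by grind
  have hb : ({a, b, c, d} : Finset V).erase b = {a, c, d} := by grind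
  have hc : ({a, b, c, d} : Finset V).erase c = {a, b, d} := by grind
  have hd : ({a, b, c, d} : Finset V).erase d = {a, b, c} := by grind
  rw [IsD2, and_iff_right hcard, card_filter_subset_eq_card_filter_erase hE hcard, card_filter,
    sum_insert (by simp [*]), sum_insert (by simp [*]), sum_pair hcd, ha, hb, hc, hd, ← add_assoc,
    ← add_assoc]

/-- `G` is the link graph of `v` in `E` away from `v`; its edges at `v` are irrelevant, so that the
complement of a link graph is a link graph in the complement of `E`. -/
def IsLink (E : Finset (Finset V)) (v : V) (G : SimpleGraph V) : Prop :=
  ∀ ⦃x y⦄, v ≠ x → v ≠ y → x ≠ y → (G.Adj x y ↔ {v, x, y} ∈ E)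

/-- The link graph of `v`. -/
def linkGraph (E : Finset (Finset V)) (v : V) : SimpleGraph V :=
  SimpleGraph.fromRel fun x y => {v, x, y} ∈ E

lemma isLink_linkGraph (E : Finset (Finset V)) (v : V) : IsLink E v (linkGraph E v) := by
  intro x y _ _ hxy
  rw [linkGraph, SimpleGraph.fromRel_adj, pair_comm y x, or_self, and_iff_right hxy]

/-- A set that, together with `v`, contains an induced copy of `D₂`. -/
def IsBad (E : Finset (Finset V)) (v : V) (S : Finset V) : Prop :=
  ∃ T ⊆ insert v S, IsD2 E T

variable {G : SimpleGraph V} {w x x' y y' z : V}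

namespace IsLink

open Classical in
lemma isD2_iff (hG : IsLink E v G) (hE : ∀ e ∈ E, #e = 3) (h : [v, a, b, c].Nodup) :
    IsD2 E {v, a, b, c} ↔ (if {a, b, c} ∈ E then 1 else 0) + (if G.Adj b c then 1 else 0)
      + (if G.Adj a c then 1 else 0) + (if G.Adj a b then 1 else 0) = 2 := by
  rw [_root_.isD2_iff hE h]
  simp only [List.nodup_cons, List.mem_cons, List.not_mem_nil, not_or, or_false] at h
  obtain ⟨⟨hva, hvb, hvc⟩, ⟨hab, hac⟩, hbc, -⟩ := h
  simp only [hG hva hvb hab, hG hva hvc hac, hG hvb hvc hbc]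

lemma isBad_of_isInducedP4 (hG : IsLink E v G) (hE : ∀ e ∈ E, #e = 3)
    (hv : v ∉ ({w, x, y, z} : Finset V)) (h : IsInducedP4 G w x y z) :
    IsBad E v {w, x, y, z} := by
  obtain ⟨hwx, hxy, hyz, hwy, hwz, hxz⟩ := h
  have := hwx.ne
  have := hxy.ne
  have := hyz.ne
  have : w ≠ y := by rintro rfl; exact hwz hyz
  have : x ≠ z := by rintro rfl; exact hwz hwx
  have : w ≠ z := by rintro rfl; exact hxz hwx.symm
  simp only [mem_insert, mem_singleton, not_or] at hv
  by_contra hbad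
  have hD T (hT : T ⊆ {v, w, x, y, z}) : ¬ IsD2 E T := fun h => hbad ⟨T, hT, h⟩
  have hwxy := (hG.isD2_iff hE (by simp [*])).not.1 (hD {v, w, x, y} (by grind))
  have hwxz := (hG.isD2_iff hE (by simp [*])).not.1 (hD {v, w, x, z} (by grind))
  have hwyz := (hG.isD2_iff hE (by simp [*])).not.1 (hD {v, w, y, z} (by grind))
  have hxyz := (hG.isD2_iff hE (by simp [*])).not.1 (hD {v, x, y, z} (by grind))
  have hquad := (_root_.isD2_iff hE (by simp [*])).not.1 (hD {w, x, y, z} (by grind))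
  simp_all

lemma isBad_of_mem (hG : IsLink E v G) (hE : ∀ e ∈ E, #e = 3)
    (h : [v, y, y', x, z].Nodup) (hmem : {y, y', x} ∈ E) (hyz : G.Adj y z) (hyz' : G.Adj y' z)
    (hyx : ¬ G.Adj y x) (hyx' : ¬ G.Adj y' x) (hxz : ¬ G.Adj x z) : IsBad E v {y, y', x, z} := by
  simp only [List.nodup_cons, List.mem_cons, List.not_mem_nil, not_or, or_false] at h
  by_contra hbad
  have hD T (hT : T ⊆ {v, y, y', x, z}) : ¬ IsD2 E T := fun h => hbad ⟨T, hT, h⟩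
  have hyyx := (hG.isD2_iff hE (by simp [*])).not.1 (hD {v, y, y', x} (by grind))
  have hyyz := (hG.isD2_iff hE (by simp [*])).not.1 (hD {v, y, y', z} (by grind))
  have hyxz := (hG.isD2_iff hE (by simp [*])).not.1 (hD {v, y, x, z} (by grind))
  have hyxz' := (hG.isD2_iff hE (by simp [*])).not.1 (hD {v, y', x, z} (by grind))
  have hquad := (_root_.isD2_iff hE (by simp [*])).not.1 (hD {y, y', x, z} (by grind))
  simp_all

lemma isD2_of_mem (hG : IsLink E v G) (hE : ∀ e ∈ E, #e = 3) (h : [v, y, y', x].Nodup)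
    (hmem : {y, y', x} ∈ E) (hyy : G.Adj y y') (hyx : ¬ G.Adj y x) (hyx' : ¬ G.Adj y' x) :
    IsD2 E {v, y, y', x} := by
  rw [hG.isD2_iff hE h]
  simp [*]

end IsLink

lemma isD2_of_mem_of_notMem (hE : ∀ e ∈ E, #e = 3) (h : [x, x', y, y'].Nodup)
    (hy : {x, x', y} ∈ E) (hy' : {x, x', y'} ∈ E) (hx : {x, y, y'} ∉ E) (hx' : {x', y, y'} ∉ E) :
    IsD2 E {x, x', y, y'} := by
  rw [isD2_iff hE h]
  simp [*]

end InducedD2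

section TupleCounts

variable {V : Type*}

lemma sum₃_le_sum₃_of_subset {A B C W : Finset V} (hA : A ⊆ W) (hB : B ⊆ W) (hC : C ⊆ W)
    {f : V → V → V → ℝ} (hf : ∀ a b c, 0 ≤ f a b c) :
    ∑ a ∈ A, ∑ b ∈ B, ∑ c ∈ C, f a b c ≤ ∑ a ∈ W, ∑ b ∈ W, ∑ c ∈ W, f a b c := by
  simp only [← sum_product']
  exact sum_le_sum_of_subset_of_nonneg (product_subset_product hA (product_subset_product hB hC))
    fun _ _ _ => hf _ _ _

lemma sum₄_le_sum₄_of_subset {A B C D W : Finset V} (hA : A ⊆ W) (hB : B ⊆ W) (hC : C ⊆ W)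
    (hD : D ⊆ W) {f : V → V → V → V → ℝ} (hf : ∀ a b c d, 0 ≤ f a b c d) :
    ∑ a ∈ A, ∑ b ∈ B, ∑ c ∈ C, ∑ d ∈ D, f a b c d
      ≤ ∑ a ∈ W, ∑ b ∈ W, ∑ c ∈ W, ∑ d ∈ W, f a b c d :=
  (sum_le_sum fun a _ => sum₃_le_sum₃_of_subset hB hC hD (hf a)).trans
    (sum_le_sum_of_subset_of_nonneg hA fun _ _ _ =>
      sum_nonneg fun _ _ => sum_nonneg fun _ _ => sum_nonneg fun _ _ => hf _ _ _ _)

variable [DecidableEq V]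

lemma sum₄_iverson_mem_le {F : Finset (Finset V)} (hF : ∀ S ∈ F, #S = 4) (W : Finset V) :
    ∑ a ∈ W, ∑ b ∈ W, ∑ c ∈ W, ∑ d ∈ W, iverson ({a, b, c, d} ∈ F) ≤ 256 * #F := by
  have hcard := card_biUnion_le_card_mul F (fun S => S ×ˢ S ×ˢ S ×ˢ S) 256
    fun S hS => by simp [hF S hS]
  have hsub : {p ∈ W ×ˢ W ×ˢ W ×ˢ W | {p.1, p.2.1, p.2.2.1, p.2.2.2} ∈ F}
      ⊆ F.biUnion fun S => S ×ˢ S ×ˢ S ×ˢ S := fun p hp =>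
    mem_biUnion.2 ⟨_, (mem_filter.1 hp).2, by simp⟩
  calc ∑ a ∈ W, ∑ b ∈ W, ∑ c ∈ W, ∑ d ∈ W, iverson ({a, b, c, d} ∈ F)
      = #{p ∈ W ×ˢ W ×ˢ W ×ˢ W | {p.1, p.2.1, p.2.2.1, p.2.2.2} ∈ F} := by
        rw [← sum_iverson]; simp only [sum_product]
    _ ≤ 256 * #F := by rw [mul_comm]; exact_mod_cast (card_le_card hsub).trans hcard

lemma sum₃_iverson_insert_mem_le {F : Finset (Finset V)} (hF : ∀ S ∈ F, #S = 4) (v : V)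
    (W : Finset V) :
    ∑ a ∈ W, ∑ b ∈ W, ∑ c ∈ W, iverson ({v, a, b, c} ∈ F) ≤ 64 * #F := by
  have hcard := card_biUnion_le_card_mul F (fun S => S ×ˢ S ×ˢ S) 64
    fun S hS => by simp [hF S hS]
  have hsub : {p ∈ W ×ˢ W ×ˢ W | {v, p.1, p.2.1, p.2.2} ∈ F}
      ⊆ F.biUnion fun S => S ×ˢ S ×ˢ S := fun p hp =>
    mem_biUnion.2 ⟨_, (mem_filter.1 hp).2, by simp⟩
  calc ∑ a ∈ W, ∑ b ∈ W, ∑ c ∈ W, iverson ({v, a, b, c} ∈ F)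
      = #{p ∈ W ×ˢ W ×ˢ W | {v, p.1, p.2.1, p.2.2} ∈ F} := by
        rw [← sum_iverson]; simp only [sum_product]
    _ ≤ 64 * #F := by rw [mul_comm]; exact_mod_cast (card_le_card hsub).trans hcard

end TupleCounts

section HypergraphCounts

variable {V : Type*} [DecidableEq V] (E : Finset (Finset V)) (v : V) (A B X W : Finset V)

/-- The number of `(a, b, x) ∈ A × B × X` that form an edge. -/
noncomputable def tripleCount : ℝ :=
  ∑ a ∈ A, ∑ b ∈ B, ∑ x ∈ X, iverson ({a, b, x} ∈ E)

/-- The number of `(a, b, c) ∈ W³` that, together with `v`, induce a copy of `D₂`. -/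
noncomputable def linkD2Count : ℝ :=
  ∑ a ∈ W, ∑ b ∈ W, ∑ c ∈ W, iverson (IsD2 E {v, a, b, c})

/-- The number of `(a, b, c, d) ∈ W⁴` that, together with `v`, contain a copy of `D₂`. -/
noncomputable def badCount : ℝ :=
  ∑ a ∈ W, ∑ b ∈ W, ∑ c ∈ W, ∑ d ∈ W, iverson (IsBad E v {a, b, c, d})

lemma tripleCount_nonneg : 0 ≤ tripleCount E A B X :=
  sum_nonneg fun _ _ => sum_nonneg fun _ _ => sum_nonneg fun _ _ => iverson_nonneg _

lemma linkD2Count_nonneg : 0 ≤ linkD2Count E v W :=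
  sum_nonneg fun _ _ => sum_nonneg fun _ _ => sum_nonneg fun _ _ => iverson_nonneg _

lemma tripleCount_union_self {Y₁ Y₂ : Finset V} (h : Disjoint Y₁ Y₂) :
    tripleCount E (Y₁ ∪ Y₂) (Y₁ ∪ Y₂) X = tripleCount E Y₁ Y₁ X + tripleCount E Y₁ Y₂ X
      + (tripleCount E Y₂ Y₁ X + tripleCount E Y₂ Y₂ X) := by
  simp only [tripleCount, sum_union h, sum_add_distrib]

variable {E v W} {G : SimpleGraph V}

lemma IsLink.p4Count_le_badCount (hG : IsLink E v G) (hE : ∀ e ∈ E, #e = 3) (hv : v ∉ W) :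
    p4Count G W ≤ badCount E v W := by
  refine sum_le_sum fun a ha => sum_le_sum fun b hb => sum_le_sum fun c hc =>
    sum_le_sum fun d hd => iverson_mono fun ⟨w, x, y, z, hpath, heq⟩ => ?_
  have hsub : {a, b, c, d} ⊆ W := by simp [insert_subset_iff, ha, hb, hc, hd]
  rw [heq]
  exact hG.isBad_of_isInducedP4 hE (fun hmem => hv (hsub (heq ▸ hmem))) hpath

lemma subset_of_card_le_four {a b c d : V} {T : Finset V} (hT : T ⊆ {v, a, b, c, d})
    (hcard : #T ≤ 4) :
    T ⊆ {a, b, c, d} ∨ T ⊆ {v, b, c, d} ∨ T ⊆ {v, a, c, d} ∨ T ⊆ {v, a, b, d} ∨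
      T ⊆ {v, a, b, c} := by
  by_contra! h
  obtain ⟨hv, ha, hb, hc, hd⟩ := h
  have hfive : #{v, a, b, c, d} = 5 := by
    repeat rw [card_insert_of_notMem (by grind)]
    rw [card_singleton]
  have hsub : {v, a, b, c, d} ⊆ T := by grind
  exact absurd (card_le_card hsub) (by omega)

lemma IsD2.eq_of_subset {a b c d : V} {T : Finset V} (hT : IsD2 E T) (h : T ⊆ {a, b, c, d}) :
    IsD2 E {a, b, c, d} := by
  rwa [← eq_of_subset_of_card_le h (card_le_four.trans hT.1.ge)]

lemma IsBad.isD2_or {a b c d : V} (h : IsBad E v {a, b, c, d}) :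
    IsD2 E {a, b, c, d} ∨ IsD2 E {v, b, c, d} ∨ IsD2 E {v, a, c, d} ∨ IsD2 E {v, a, b, d} ∨
      IsD2 E {v, a, b, c} := by
  obtain ⟨T, hT, hD⟩ := h
  exact (subset_of_card_le_four hT hD.1.le).imp hD.eq_of_subset <| .imp hD.eq_of_subset <|
    .imp hD.eq_of_subset <| .imp hD.eq_of_subset hD.eq_of_subset

lemma badCount_le (E : Finset (Finset V)) (v : V) (W : Finset V) :
    badCount E v W ≤ ∑ a ∈ W, ∑ b ∈ W, ∑ c ∈ W, ∑ d ∈ W, iverson (IsD2 E {a, b, c, d})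
      + 4 * (#W * linkD2Count E v W) := by
  calc badCount E v W
      ≤ ∑ a ∈ W, ∑ b ∈ W, ∑ c ∈ W, ∑ d ∈ W, (iverson (IsD2 E {a, b, c, d})
        + (iverson (IsD2 E {v, b, c, d}) + (iverson (IsD2 E {v, a, c, d})
        + (iverson (IsD2 E {v, a, b, d}) + iverson (IsD2 E {v, a, b, c}))))) :=
        sum_le_sum fun a _ => sum_le_sum fun b _ => sum_le_sum fun c _ => sum_le_sum fun d _ =>
          (iverson_mono IsBad.isD2_or).trans <| iverson_or_le_add <| iverson_or_le_add <|
            iverson_or_le_add <| iverson_or_le_add le_rfl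
    _ = ∑ a ∈ W, ∑ b ∈ W, ∑ c ∈ W, ∑ d ∈ W, iverson (IsD2 E {a, b, c, d})
        + 4 * (#W * linkD2Count E v W) := by
        simp only [linkD2Count, sum_add_distrib, sum_const, nsmul_eq_mul, ← mul_sum]
        ring

end HypergraphCounts

section InducedD2Counts

variable {V : Type} [Fintype V] [DecidableEq V] (E : Finset (Finset V)) (v : V) (W : Finset V)

lemma linkD2Count_le_inducedD2CountVia :
    linkD2Count E v W ≤ 64 * inducedD2CountVia E v := by
  refine le_trans (le_of_eq ?_) (sum₃_iverson_insert_mem_le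
    (fun S hS => (mem_powersetCard.1 (mem_filter.1 hS).1).2) v W)
  simp [linkD2Count, IsD2]

lemma badCount_le_inducedD2Count (hW : #W ≤ Fintype.card V) :
    badCount E v W ≤ 256 * inducedD2Count E
      + 256 * (Fintype.card V * inducedD2CountVia E v) := by
  have hD2 : ∑ a ∈ W, ∑ b ∈ W, ∑ c ∈ W, ∑ d ∈ W, iverson (IsD2 E {a, b, c, d})
      ≤ 256 * inducedD2Count E := by
    refine le_trans (le_of_eq ?_) (sum₄_iverson_mem_le
      (fun S hS => (mem_powersetCard.1 (mem_filter.1 hS).1).2) W)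
    simp [IsD2]
  have hlink : #W * linkD2Count E v W ≤ Fintype.card V * (64 * inducedD2CountVia E v) := by
    have := linkD2Count_nonneg E v W
    gcongr
    exact linkD2Count_le_inducedD2CountVia E v W
  linarith [badCount_le E v W]

end InducedD2Counts

section TripleBounds

variable {V : Type*} [DecidableEq V] {E : Finset (Finset V)} {v : V} {G : SimpleGraph V}
  {W X Y Z Y₁ Y₂ Z₁ Z₂ : Finset V} {n ξ κ η ω : ℝ} {x x' y y' z : V}

lemma nodup_of_card_eq_three {a b c : V} (h : #{a, b, c} = 3) : [a, b, c].Nodup := by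
  rw [← Multiset.coe_nodup, ← Multiset.toFinset_card_eq_card_iff_nodup]
  simpa using h

namespace IsLink

lemma isD2_or_of_mem (hG : IsLink E v G) (hE : ∀ e ∈ E, #e = 3)
    (hv : v ∉ ({y, y', x} : Finset V)) (hmem : {y, y', x} ∈ E) :
    G.Adj y x ∨ G.Adj y' x ∨ Gᶜ.Adj y y' ∨ IsD2 E {v, y, y', x} := by
  have hdup : [y, y', x].Nodup := nodup_of_card_eq_three (hE _ hmem)
  by_contra! h
  obtain ⟨hyx, hyx', hyy, hD2⟩ := h
  have hyy' : G.Adj y y' := by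
    by_contra hadj
    exact hyy ⟨by grind, hadj⟩
  exact hD2 (hG.isD2_of_mem hE (List.nodup_cons.2 ⟨by simpa using hv, hdup⟩) hmem hyy' hyx hyx')

lemma isBad_or_of_mem (hG : IsLink E v G) (hE : ∀ e ∈ E, #e = 3)
    (hv : v ∉ ({y, y', x, z} : Finset V)) (hz : z ∉ ({y, y', x} : Finset V))
    (hmem : {y, y', x} ∈ E) :
    G.Adj y x ∨ G.Adj y' x ∨ Gᶜ.Adj y z ∨ Gᶜ.Adj y' z ∨ G.Adj x z ∨ IsBad E v {y, y', x, z} := by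
  have hdup : [y, y', x].Nodup := nodup_of_card_eq_three (hE _ hmem)
  by_contra! h
  obtain ⟨hyx, hyx', hyz, hyz', hxz, hbad⟩ := h
  simp only [SimpleGraph.compl_adj, not_and, not_not] at hyz hyz'
  exact hbad (hG.isBad_of_mem hE (by grind) hmem (hyz (by grind)) (hyz' (by grind)) hyx hyx' hxz)

lemma tripleCount_le (hG : IsLink E v G) (hE : ∀ e ∈ E, #e = 3) (hv : v ∉ W) (hW : (#W : ℝ) ≤ n)
    (hX : X ⊆ W) (hY₁ : Y₁ ⊆ W) (hY₂ : Y₂ ⊆ W) (hXY₁ : crossCount G X Y₁ ≤ η * n ^ 2)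
    (hXY₂ : crossCount G X Y₂ ≤ η * n ^ 2) (hYY : crossCount Gᶜ Y₁ Y₂ ≤ η * n ^ 2)
    (hlink : linkD2Count E v W ≤ η * n ^ 3) :
    tripleCount E Y₁ Y₂ X ≤ 4 * η * n ^ 3 := by
  have hmul {A B C : Finset V} {G : SimpleGraph V} (hA : A ⊆ W)
      (hBC : crossCount G B C ≤ η * n ^ 2) : #A * crossCount G B C ≤ n * (η * n ^ 2) := by
    have hAn := cast_card_le_of_subset hA hW
    exact mul_le_mul hAn hBC (crossCount_nonneg G B C) ((Nat.cast_nonneg _).trans hAn)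
  have hD2 : ∑ y ∈ Y₁, ∑ y' ∈ Y₂, ∑ x ∈ X, iverson (IsD2 E {v, y, y', x}) ≤ η * n ^ 3 :=
    (sum₃_le_sum₃_of_subset hY₁ hY₂ hX fun _ _ _ => iverson_nonneg _).trans hlink
  calc tripleCount E Y₁ Y₂ X
      ≤ ∑ y ∈ Y₁, ∑ y' ∈ Y₂, ∑ x ∈ X, (iverson (G.Adj y x) + (iverson (G.Adj y' x)
        + (iverson (Gᶜ.Adj y y') + iverson (IsD2 E {v, y, y', x})))) :=
        sum_le_sum fun y hy => sum_le_sum fun y' hy' => sum_le_sum fun x hx =>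
          (iverson_mono (hG.isD2_or_of_mem hE (by grind))).trans <|
            iverson_or_le_add <| iverson_or_le_add <| iverson_or_le_add le_rfl
    _ = #Y₂ * crossCount G X Y₁ + #Y₁ * crossCount G X Y₂ + #X * crossCount Gᶜ Y₁ Y₂
        + ∑ y ∈ Y₁, ∑ y' ∈ Y₂, ∑ x ∈ X, iverson (IsD2 E {v, y, y', x}) := by
        rw [crossCount_comm G X, crossCount_comm G X]
        simp only [crossCount, degreeInto, sum_add_distrib, sum_const, nsmul_eq_mul, ← mul_sum]
        ring
    _ ≤ 4 * η * n ^ 3 := by linarith [hmul hY₂ hXY₁, hmul hY₁ hXY₂, hmul hX hYY]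

end IsLink

namespace IsWitness

lemma card_mul_tripleCount_le (h : IsWitness G W n κ η X Y Z) (hG : IsLink E v G)
    (hE : ∀ e ∈ E, #e = 3) (hv : v ∉ W) (hW : (#W : ℝ) ≤ n) (hX : X ⊆ W) (hY : Y ⊆ W)
    (hbad : badCount E v W ≤ η * n ^ 4) :
    #Z * tripleCount E Y Y X ≤ 6 * η * n ^ 4 := by
  have hmul {A B C D : Finset V} {G : SimpleGraph V} (hA : A ⊆ W) (hB : B ⊆ W)
      (hCD : crossCount G C D ≤ η * n ^ 2) :
      #A * (#B * crossCount G C D) ≤ n * (n * (η * n ^ 2)) := by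
    have hAn := cast_card_le_of_subset hA hW
    have hBn := cast_card_le_of_subset hB hW
    have hn : 0 ≤ n := (Nat.cast_nonneg _).trans hAn
    have hnonneg := crossCount_nonneg G C D
    gcongr
  have hbad' : ∑ y ∈ Y, ∑ y' ∈ Y, ∑ x ∈ X, ∑ z ∈ Z, iverson (IsBad E v {y, y', x, z})
      ≤ η * n ^ 4 :=
    (sum₄_le_sum₄_of_subset hY hY hX h.subset fun _ _ _ _ => iverson_nonneg _).trans hbad
  have hZ := h.subset
  have hXZ := Finset.disjoint_left.1 h.disjoint_left
  have hYZ := Finset.disjoint_left.1 h.disjoint_right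
  calc #Z * tripleCount E Y Y X
      = ∑ y ∈ Y, ∑ y' ∈ Y, ∑ x ∈ X, ∑ _z ∈ Z, iverson ({y, y', x} ∈ E) := by
        simp only [tripleCount, sum_const, nsmul_eq_mul, mul_sum]
    _ ≤ ∑ y ∈ Y, ∑ y' ∈ Y, ∑ x ∈ X, ∑ z ∈ Z, (iverson (G.Adj y x) + (iverson (G.Adj y' x)
        + (iverson (Gᶜ.Adj y z) + (iverson (Gᶜ.Adj y' z) + (iverson (G.Adj x z)
        + iverson (IsBad E v {y, y', x, z})))))) :=
        sum_le_sum fun y hy => sum_le_sum fun y' hy' => sum_le_sum fun x hx =>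
          sum_le_sum fun z hz =>
            (iverson_mono (hG.isBad_or_of_mem hE (by grind) (by grind))).trans <|
              iverson_or_le_add <| iverson_or_le_add <| iverson_or_le_add <|
                iverson_or_le_add <| iverson_or_le_add le_rfl
    _ = 2 * (#Y * (#Z * crossCount G X Y)) + 2 * (#Y * (#X * crossCount Gᶜ Y Z))
        + #Y * (#Y * crossCount G X Z)
        + ∑ y ∈ Y, ∑ y' ∈ Y, ∑ x ∈ X, ∑ z ∈ Z, iverson (IsBad E v {y, y', x, z}) := by
        rw [crossCount_comm G X Y]
        simp only [crossCount, degreeInto, sum_add_distrib, sum_const, nsmul_eq_mul, ← mul_sum]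
        ring
    _ ≤ 6 * η * n ^ 4 := by
        linarith [hmul hY hZ h.crossCount_left_right_le, hmul hY hX h.crossCount_compl_right_le,
          hmul hY hY h.crossCount_left_le]

lemma tripleCount_le (h : IsWitness G W n κ η X Y Z) (hG : IsLink E v G) (hE : ∀ e ∈ E, #e = 3)
    (hv : v ∉ W) (hW : (#W : ℝ) ≤ n) (hn : 0 < n) (hκ : 0 < κ) (hX : X ⊆ W) (hY : Y ⊆ W)
    (hbad : badCount E v W ≤ η * n ^ 4) :
    tripleCount E Y Y X ≤ 6 * η / κ * n ^ 3 := by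
  refine le_of_mul_le_mul_left ?_ (mul_pos hκ hn)
  calc κ * n * tripleCount E Y Y X ≤ #Z * tripleCount E Y Y X :=
        mul_le_mul_of_nonneg_right h.le_card (tripleCount_nonneg E Y Y X)
    _ ≤ 6 * η * n ^ 4 := h.card_mul_tripleCount_le hG hE hv hW hX hY hbad
    _ = κ * n * (6 * η / κ * n ^ 3) := by field_simp

end IsWitness

lemma IsDecomposition.tripleCount_le (h : IsDecomposition G W n ξ η X Y₁ Y₂ Z₁ Z₂)
    (hG : IsLink E v G) (hE : ∀ e ∈ E, #e = 3) (hv : v ∉ W) (hW : (#W : ℝ) ≤ n) (hn : 0 < n)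
    (hξ : 0 < ξ) (hξ₁ : ξ < 1) (hη : 0 < η) (hbad : badCount E v W ≤ η * n ^ 4)
    (hlink : linkD2Count E v W ≤ η * n ^ 3) :
    tripleCount E (Y₁ ∪ Y₂) (Y₁ ∪ Y₂) X ≤ 50000 * η / ξ ^ 2 * n ^ 3 := by
  obtain ⟨hY₁, hY₂⟩ := union_subset_iff.1 h.right_subset
  have hκ : 0 < ξ ^ 2 / 4000 := by positivity
  have h₁₁ := h.witness₁.tripleCount_le hG hE hv hW hn hκ h.left_subset hY₁ hbad
  have h₂₂ := h.witness₂.tripleCount_le hG hE hv hW hn hκ h.left_subset hY₂ hbad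
  have h₁₂ := hG.tripleCount_le hE hv hW h.left_subset hY₁ hY₂
    h.witness₁.crossCount_left_right_le h.witness₂.crossCount_left_right_le
    h.crossCount_compl_parts_le hlink
  have h₂₁ := hG.tripleCount_le hE hv hW h.left_subset hY₂ hY₁
    h.witness₂.crossCount_left_right_le h.witness₁.crossCount_left_right_le
    (by rw [crossCount_comm]; exact h.crossCount_compl_parts_le) hlink
  have hsmall : 8 * η * n ^ 3 ≤ 2000 * η / ξ ^ 2 * n ^ 3 := by
    have hsq : ξ ^ 2 ≤ 1 := pow_le_one₀ hξ.le hξ₁.le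
    gcongr
    rw [le_div_iff₀ (by positivity)]
    nlinarith
  rw [tripleCount_union_self E X h.disjoint_parts]
  calc _ ≤ 2 * (6 * η / (ξ ^ 2 / 4000) * n ^ 3) + 8 * η * n ^ 3 := by linarith
    _ ≤ 2 * (6 * η / (ξ ^ 2 / 4000) * n ^ 3) + 2000 * η / ξ ^ 2 * n ^ 3 := by gcongr
    _ = 50000 * η / ξ ^ 2 * n ^ 3 := by field_simp; norm_num

lemma isBad_or_of_mem_of_mem (hE : ∀ e ∈ E, #e = 3)
    (h : {x, x', y} ∈ E ∧ {x, x', y'} ∈ E) :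
    y = y' ∨ {y, y', x} ∈ E ∨ {y, y', x'} ∈ E ∨ IsBad E v {x, x', y, y'} := by
  have hdup : [x, x', y].Nodup := nodup_of_card_eq_three (hE _ h.1)
  have hdup' : [x, x', y'].Nodup := nodup_of_card_eq_three (hE _ h.2)
  by_contra! hno
  obtain ⟨hyy, hx, hx', hbad⟩ := hno
  have hrot {a b c : V} : ({a, b, c} : Finset V) = {b, c, a} := by grind
  exact hbad ⟨_, subset_insert _ _, isD2_of_mem_of_notMem hE (by grind) h.1 h.2
    (by rwa [hrot]) (by rwa [hrot])⟩

lemma sum_sq_codegree_le (hE : ∀ e ∈ E, #e = 3) (hX : X ⊆ W) (hY : Y ⊆ W) :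
    ∑ x ∈ X, ∑ x' ∈ X, (∑ y ∈ Y, iverson ({x, x', y} ∈ E)) ^ 2
      ≤ #X * (#X * #Y) + 2 * (#X * tripleCount E Y Y X) + badCount E v W := by
  have hdiag : ∑ y ∈ Y, ∑ y' ∈ Y, iverson (y = y') = #Y := by
    have hrow {y : V} (hy : y ∈ Y) : ∑ y' ∈ Y, iverson (y = y') = 1 := by
      rw [sum_iverson, filter_eq, if_pos hy, card_singleton, Nat.cast_one]
    simp [sum_congr rfl fun _ => hrow]
  have hrot : ∑ x ∈ X, ∑ y ∈ Y, ∑ y' ∈ Y, iverson ({y, y', x} ∈ E) = tripleCount E Y Y X := by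
    rw [sum_comm]
    exact sum_congr rfl fun y _ => sum_comm
  have hbad : ∑ x ∈ X, ∑ x' ∈ X, ∑ y ∈ Y, ∑ y' ∈ Y, iverson (IsBad E v {x, x', y, y'})
      ≤ badCount E v W :=
    sum₄_le_sum₄_of_subset hX hX hY hY fun _ _ _ _ => iverson_nonneg _
  calc ∑ x ∈ X, ∑ x' ∈ X, (∑ y ∈ Y, iverson ({x, x', y} ∈ E)) ^ 2
      = ∑ x ∈ X, ∑ x' ∈ X, ∑ y ∈ Y, ∑ y' ∈ Y, iverson ({x, x', y} ∈ E ∧ {x, x', y'} ∈ E) := by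
        simp only [sq, sum_mul_sum, iverson_and]
    _ ≤ ∑ x ∈ X, ∑ x' ∈ X, ∑ y ∈ Y, ∑ y' ∈ Y, (iverson (y = y') + (iverson ({y, y', x} ∈ E)
        + (iverson ({y, y', x'} ∈ E) + iverson (IsBad E v {x, x', y, y'})))) :=
        sum_le_sum fun x _ => sum_le_sum fun x' _ => sum_le_sum fun y _ => sum_le_sum fun y' _ =>
          (iverson_mono (isBad_or_of_mem_of_mem hE)).trans <|
            iverson_or_le_add <| iverson_or_le_add <| iverson_or_le_add le_rfl
    _ = #X * (#X * #Y) + 2 * (#X * tripleCount E Y Y X)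
        + ∑ x ∈ X, ∑ x' ∈ X, ∑ y ∈ Y, ∑ y' ∈ Y, iverson (IsBad E v {x, x', y, y'}) := by
        simp only [sum_add_distrib, sum_const, nsmul_eq_mul, ← mul_sum, hdiag, hrot]
        ring
    _ ≤ _ := by gcongr

lemma tripleCount_swap_le (hE : ∀ e ∈ E, #e = 3) (hW : (#W : ℝ) ≤ n) (hX : X ⊆ W) (hY : Y ⊆ W)
    (hηn : 1 ≤ η * n) (hω : 0 ≤ ω) (hκ : 2 * η + 2 * κ ≤ ω ^ 2)
    (hbad : badCount E v W ≤ η * n ^ 4) (hYYX : tripleCount E Y Y X ≤ κ * n ^ 3) :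
    tripleCount E X X Y ≤ ω * n ^ 3 := by
  have hXn : (#X : ℝ) ≤ n := cast_card_le_of_subset hX hW
  have hYn : (#Y : ℝ) ≤ n := cast_card_le_of_subset hY hW
  have hn : 0 ≤ n := (Nat.cast_nonneg _).trans hXn
  have hsq : ∑ x ∈ X, ∑ x' ∈ X, (∑ y ∈ Y, iverson ({x, x', y} ∈ E)) ^ 2 ≤ ω ^ 2 * n ^ 4 := by
    have hdiag : #X * (#X * #Y) ≤ η * n ^ 4 :=
      calc #X * (#X * #Y) ≤ 1 * (n * (n * n)) := by rw [one_mul]; gcongr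
        _ ≤ η * n * (n * (n * n)) := by gcongr
        _ = η * n ^ 4 := by ring
    have hmul : #X * tripleCount E Y Y X ≤ n * (κ * n ^ 3) := by
      have := tripleCount_nonneg E Y Y X
      gcongr
    calc _ ≤ #X * (#X * #Y) + 2 * (#X * tripleCount E Y Y X) + badCount E v W :=
          sum_sq_codegree_le hE hX hY
      _ ≤ (2 * η + 2 * κ) * n ^ 4 := by linarith
      _ ≤ ω ^ 2 * n ^ 4 := by gcongr
  refine (pow_le_pow_iff_left₀ (tripleCount_nonneg E X X Y) (by positivity) two_ne_zero).1 ?_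
  calc tripleCount E X X Y ^ 2
      ≤ #(X ×ˢ X) * ∑ x ∈ X, ∑ x' ∈ X, (∑ y ∈ Y, iverson ({x, x', y} ∈ E)) ^ 2 := by
        simpa only [tripleCount, sum_product] using sq_sum_le_card_mul_sum_sq (s := X ×ˢ X)
          (f := fun p => ∑ y ∈ Y, iverson ({p.1, p.2, y} ∈ E))
    _ ≤ (n * n) * (ω ^ 2 * n ^ 4) := by
        rw [card_product, Nat.cast_mul]
        gcongr
    _ = (ω * n ^ 3) ^ 2 := by ring

end TripleBounds

section Complement

variable {V : Type*} [Fintype V] [DecidableEq V] {E : Finset (Finset V)} {S X Y e : Finset V}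
  {v : V} {G : SimpleGraph V}

/-- The 3-uniform hypergraph whose edges are the triples that are not in `E`. -/
def complHypergraph (E : Finset (Finset V)) : Finset (Finset V) :=
  univ.powersetCard 3 \ E

lemma mem_complHypergraph : e ∈ complHypergraph E ↔ #e = 3 ∧ e ∉ E := by
  simp [complHypergraph]

lemma card_of_mem_complHypergraph : ∀ e ∈ complHypergraph E, #e = 3 :=
  fun _ h => (mem_complHypergraph.1 h).1

lemma card_filter_add_card_filter_complHypergraph (hE : ∀ e ∈ E, #e = 3)
    (P : Finset V → Prop) [DecidablePred P] :
    #{e ∈ E | P e} + #{e ∈ complHypergraph E | P e} = #{e ∈ univ.powersetCard 3 | P e} := by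
  have hsub : E ⊆ univ.powersetCard 3 := fun e he => mem_powersetCard_univ.2 (hE e he)
  rw [complHypergraph, ← card_union_of_disjoint (disjoint_filter_filter disjoint_sdiff),
    ← filter_union, union_sdiff_of_subset hsub]

lemma isD2_complHypergraph (hE : ∀ e ∈ E, #e = 3) : IsD2 (complHypergraph E) S ↔ IsD2 E S := by
  refine and_congr_right fun hS => ?_
  have hfilter : {e ∈ (univ : Finset V).powersetCard 3 | e ⊆ S} = S.powersetCard 3 := by
    ext e
    simp [mem_powersetCard, and_comm]
  have hsum := card_filter_add_card_filter_complHypergraph hE (· ⊆ S)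
  rw [hfilter, card_powersetCard, hS, show Nat.choose 4 3 = 4 from rfl] at hsum
  omega

lemma badCount_complHypergraph (hE : ∀ e ∈ E, #e = 3) (v : V) (W : Finset V) :
    badCount (complHypergraph E) v W = badCount E v W := by
  simp only [badCount, IsBad, isD2_complHypergraph hE]

lemma linkD2Count_complHypergraph (hE : ∀ e ∈ E, #e = 3) (v : V) (W : Finset V) :
    linkD2Count (complHypergraph E) v W = linkD2Count E v W := by
  simp only [linkD2Count, isD2_complHypergraph hE]

lemma IsLink.compl (hG : IsLink E v G) : IsLink (complHypergraph E) v Gᶜ := by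
  intro x y hx hy hxy
  have hcard : #{v, x, y} = 3 := card_eq_three.2 ⟨v, x, y, hx, hy, hxy, rfl⟩
  rw [SimpleGraph.compl_adj, mem_complHypergraph, hG hx hy hxy, and_iff_right hxy,
    and_iff_right hcard]

lemma card_filter_mem_powersetCard_three (v : V) :
    #{e ∈ univ.powersetCard 3 | v ∈ e} = (Fintype.card V - 1).choose 2 := by
  rw [← card_univ, ← card_erase_of_mem (mem_univ v), ← card_powersetCard]
  refine card_nbij' (erase · v) (insert v) (fun e he => ?_) (fun p hp => ?_)
    (fun e he => insert_erase (mem_filter.1 he).2) fun p hp => erase_insert ?_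
  · obtain ⟨he, hve⟩ := mem_filter.1 he
    exact mem_powersetCard.2 ⟨erase_subset_erase v (subset_univ e),
      by rw [card_erase_of_mem hve, mem_powersetCard_univ.1 he]⟩
  · obtain ⟨hpv, hcard⟩ := mem_powersetCard.1 hp
    have hvp : v ∉ p := fun h => notMem_erase v univ (hpv h)
    exact mem_filter.2 ⟨mem_powersetCard_univ.2 (by rw [card_insert_of_notMem hvp, hcard]),
      mem_insert_self v p⟩
  · exact fun h => notMem_erase v univ ((mem_powersetCard.1 hp).1 h)

lemma card_filter_inter_powersetCard_three (h : Disjoint X Y) :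
    #{e ∈ univ.powersetCard 3 | #(e ∩ X) = 2 ∧ #(e ∩ Y) = 1} = (#X).choose 2 * #Y := by
  have hXY := Finset.disjoint_left.1 h
  rw [← card_powersetCard, ← Nat.choose_one_right #Y, ← card_powersetCard, ← card_product]
  refine card_nbij' (fun e => (e ∩ X, e ∩ Y)) (fun p => p.1 ∪ p.2) (fun e he => ?_)
    (fun p hp => ?_) (fun e he => ?_) fun p hp => ?_
  · simpa [mem_powersetCard] using (mem_filter.1 he).2
  · simp only [coe_product, Set.mem_prod, mem_coe, mem_powersetCard] at hp
    obtain ⟨⟨hpX, hp₂⟩, hpY, hp₁⟩ := hp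
    have hX : (p.1 ∪ p.2) ∩ X = p.1 := by grind
    have hY : (p.1 ∪ p.2) ∩ Y = p.2 := by grind
    have hcard : #(p.1 ∪ p.2) = 3 := by
      rw [card_union_of_disjoint (disjoint_of_subset_left hpX (disjoint_of_subset_right hpY h)),
        hp₁, hp₂]
    simp [hX, hY, hp₁, hp₂, hcard]
  · simp only [coe_filter, mem_powersetCard_univ, Set.mem_ofPred_eq] at he
    refine eq_of_subset_of_card_le (union_subset inter_subset_left inter_subset_left) ?_
    rw [card_union_of_disjoint (disjoint_of_subset_left inter_subset_right
      (disjoint_of_subset_right inter_subset_right h)), he.1, he.2.1, he.2.2]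
  · simp only [coe_product, Set.mem_prod, mem_coe, mem_powersetCard] at hp
    ext x <;> grind

end Complement

section Densities

variable {V : Type} [DecidableEq V] {E : Finset (Finset V)} {X Y : Finset V} {v : V}
  {G : SimpleGraph V} {ξ ε : ℝ}

lemma eXXY_le_tripleCount (hE : ∀ e ∈ E, #e = 3) (h : Disjoint X Y) :
    eXXY E X Y ≤ tripleCount E X X Y := by
  have hXY := Finset.disjoint_left.1 h
  have hsub : {e ∈ E | #(e ∩ X) = 2 ∧ #(e ∩ Y) = 1}
      ⊆ image (fun p => {p.1, p.2.1, p.2.2}) {p ∈ X ×ˢ X ×ˢ Y | {p.1, p.2.1, p.2.2} ∈ E} := by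
    intro e he
    obtain ⟨he, heX, heY⟩ := mem_filter.1 he
    obtain ⟨x, x', hxx, hex⟩ := card_eq_two.1 heX
    obtain ⟨y, hey⟩ := card_eq_one.1 heY
    have hx : x ∈ e ∩ X := by simp [hex]
    have hx' : x' ∈ e ∩ X := by simp [hex]
    have hy : y ∈ e ∩ Y := by simp [hey]
    rw [mem_inter] at hx hx' hy
    have hcard : #{x, x', y} = 3 := card_eq_three.2 ⟨x, x', y, hxx, by grind, by grind, rfl⟩
    have heq : {x, x', y} = e := eq_of_subset_of_card_le (by grind) (by rw [hE e he, hcard])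
    exact mem_image.2 ⟨(x, x', y), by simp [*], heq⟩
  calc (eXXY E X Y : ℝ) ≤ #{p ∈ X ×ˢ X ×ˢ Y | {p.1, p.2.1, p.2.2} ∈ E} :=
        Nat.cast_le.2 ((card_le_card hsub).trans card_image_le)
    _ = tripleCount E X X Y := by
        rw [← sum_iverson]; simp only [sum_product, tripleCount]

lemma dXXY_le_of_tripleCount_le (hE : ∀ e ∈ E, #e = 3) (h : Disjoint X Y) {n : ℝ} (hξ : 0 < ξ)
    (hε : 0 ≤ ε) (hn : 100 ≤ ξ * n) (hX : ξ / 10 * n ≤ #X) (hY : ξ / 10 * n ≤ #Y)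
    (hcount : tripleCount E X X Y ≤ ε * ξ ^ 3 / 4000 * n ^ 3) : dXXY E X Y ≤ ε := by
  have hn₀ : 0 < n := pos_of_mul_pos_right (by linarith) hξ.le
  have hden : ξ ^ 3 / 4000 * n ^ 3 ≤ (#X).choose 2 * #Y := by
    have hX₁ : (0 : ℝ) ≤ #X - 1 := by linarith
    rw [Nat.cast_choose_two]
    calc ξ ^ 3 / 4000 * n ^ 3 = (ξ / 10 * n) * (ξ / 10 * n / 2) / 2 * (ξ / 10 * n) := by ring
      _ ≤ #X * (#X - 1 : ℝ) / 2 * #Y := by gcongr; linarith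
  refine div_le_of_le_mul₀ (by positivity) hε ?_
  calc (eXXY E X Y : ℝ) ≤ tripleCount E X X Y := eXXY_le_tripleCount hE h
    _ ≤ ε * ξ ^ 3 / 4000 * n ^ 3 := hcount
    _ = ε * (ξ ^ 3 / 4000 * n ^ 3) := by ring
    _ ≤ ε * ((#X).choose 2 * #Y) := by gcongr

variable [Fintype V]

lemma dXXY_complHypergraph (hE : ∀ e ∈ E, #e = 3) (h : Disjoint X Y) (hX : 2 ≤ #X)
    (hY : 0 < #Y) : dXXY (complHypergraph E) X Y = 1 - dXXY E X Y := by
  have hchoose : (0 : ℝ) < (#X).choose 2 := Nat.cast_pos.2 (Nat.choose_pos hX)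
  have hpos : (0 : ℝ) < #Y := Nat.cast_pos.2 hY
  have hsum : (eXXY E X Y + eXXY (complHypergraph E) X Y : ℝ) = (#X).choose 2 * #Y := by
    exact_mod_cast (card_filter_add_card_filter_complHypergraph hE _).trans
      (card_filter_inter_powersetCard_three h)
  rw [dXXY, dXXY, eq_sub_iff_add_eq, ← add_div, add_comm, hsum,
    div_self (mul_pos hchoose hpos).ne']

lemma EpsHomogeneous.of_complHypergraph (h : EpsHomogeneous (complHypergraph E) X Y ε)
    (hE : ∀ e ∈ E, #e = 3) (hXY : Disjoint X Y) (hX : 2 ≤ #X) (hY : 2 ≤ #Y) :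
    EpsHomogeneous E X Y ε := by
  rw [EpsHomogeneous, dXXY_complHypergraph hE hXY hX (by omega),
    dXXY_complHypergraph hE hXY.symm hY (by omega)] at h
  rcases h with h | h
  · exact Or.inr ⟨by linarith, by linarith⟩
  · exact Or.inl ⟨by linarith, by linarith⟩

lemma dLinkDensity_complHypergraph (hE : ∀ e ∈ E, #e = 3) (hV : 3 ≤ Fintype.card V) (v : V) :
    dLinkDensity (complHypergraph E) v = 1 - dLinkDensity E v := by
  have hchoose : (0 : ℝ) < (Fintype.card V - 1).choose 2 :=
    Nat.cast_pos.2 (Nat.choose_pos (by omega))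
  have hsum : (#{e ∈ E | v ∈ e} + #{e ∈ complHypergraph E | v ∈ e} : ℝ)
      = (Fintype.card V - 1).choose 2 := by
    exact_mod_cast (card_filter_add_card_filter_complHypergraph hE _).trans
      (card_filter_mem_powersetCard_three v)
  rw [dLinkDensity, dLinkDensity, eq_sub_iff_add_eq, ← add_div, add_comm, hsum,
    div_self hchoose.ne']

namespace IsLink

lemma two_mul_card_le_crossCount (hG : IsLink E v G) (hE : ∀ e ∈ E, #e = 3) :
    2 * #{e ∈ E | v ∈ e} ≤ crossCount G (univ.erase v) (univ.erase v) := by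
  classical
  set P := {p ∈ univ.erase v ×ˢ univ.erase v | G.Adj p.1 p.2}
  have hP : crossCount G (univ.erase v) (univ.erase v) = #P := by
    rw [← sum_iverson]; simp only [sum_product, crossCount, degreeInto]
  have hmaps : ∀ p ∈ P, {v, p.1, p.2} ∈ {e ∈ E | v ∈ e} := by
    intro p hp
    simp only [P, mem_filter, mem_product, mem_erase] at hp
    simpa using (hG hp.1.1.1.symm hp.1.2.1.symm hp.2.ne).1 hp.2
  have hfiber : ∀ e ∈ {e ∈ E | v ∈ e}, 2 ≤ #{p ∈ P | {v, p.1, p.2} = e} := by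
    intro e he
    obtain ⟨he, hve⟩ := mem_filter.1 he
    have hcard : #(e.erase v) = 2 := by rw [card_erase_of_mem hve, hE e he]
    calc 2 = #(e.erase v).offDiag := by rw [offDiag_card, hcard]
      _ ≤ _ := card_le_card fun p hp => ?_
    obtain ⟨hp₁, hp₂, hne⟩ := mem_offDiag.1 hp
    rw [mem_erase] at hp₁ hp₂
    have htriple : #{v, p.1, p.2} = 3 :=
      card_eq_three.2 ⟨v, _, _, hp₁.1.symm, hp₂.1.symm, hne, rfl⟩
    have heq : {v, p.1, p.2} = e := eq_of_subset_of_card_le (by grind) (by rw [hE e he, htriple])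
    simp [P, hp₁.1, hp₂.1, hG hp₁.1.symm hp₂.1.symm hne, heq, he]
  rw [hP, card_eq_sum_card_fiberwise hmaps, mul_comm]
  exact_mod_cast card_nsmul_le_sum _ _ _ hfiber

lemma le_crossCount (hG : IsLink E v G) (hE : ∀ e ∈ E, #e = 3) (hV : 100 ≤ Fintype.card V)
    (hξ : 0 ≤ ξ) (h : ξ ≤ dLinkDensity E v) :
    0.95 * ξ * Fintype.card V ^ 2 ≤ crossCount G (univ.erase v) (univ.erase v) := by
  have hn : (100 : ℝ) ≤ Fintype.card V := by exact_mod_cast hV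
  have hchoose : 0.95 * (Fintype.card V : ℝ) ^ 2 ≤ 2 * (Fintype.card V - 1).choose 2 := by
    rw [Nat.cast_choose_two, Nat.cast_sub (by omega)]
    push_cast
    nlinarith
  calc 0.95 * ξ * (Fintype.card V : ℝ) ^ 2 = ξ * (0.95 * (Fintype.card V : ℝ) ^ 2) := by ring
    _ ≤ ξ * (2 * (Fintype.card V - 1).choose 2) := by gcongr
    _ = 2 * (ξ * (Fintype.card V - 1).choose 2) := by ring
    _ ≤ 2 * #{e ∈ E | v ∈ e} := by
        gcongr
        exact mul_le_of_le_div₀ (Nat.cast_nonneg _) (Nat.cast_nonneg _) h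
    _ ≤ crossCount G (univ.erase v) (univ.erase v) := hG.two_mul_card_le_crossCount hE

end IsLink

end Densities

section HomogeneousPartition

variable {V : Type} [Fintype V] [DecidableEq V] {E : Finset (Finset V)} {v : V}
  {G : SimpleGraph V} {X Y Y₁ Y₂ Z₁ Z₂ : Finset V} {ξ ε η : ℝ}

/-- The vertex set is a union of two large parts that form an `ε`-homogeneous pair and a small
leftover set, with the proportions of the theorem. -/
def HasHomogeneousPartition (E : Finset (Finset V)) (ξ ε : ℝ) : Prop :=
  ∃ X Y S : Finset V, Disjoint X Y ∧ Disjoint X S ∧ Disjoint Y S ∧ X ∪ Y ∪ S = univ ∧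
    (#X : ℝ) ≥ ξ / 10 * Fintype.card V ∧ (#Y : ℝ) ≥ ξ / 10 * Fintype.card V ∧
    (#S : ℝ) ≤ ξ / 2 * Fintype.card V ∧ EpsHomogeneous E X Y ε

lemma HasHomogeneousPartition.of_complHypergraph
    (h : HasHomogeneousPartition (complHypergraph E) ξ ε) (hE : ∀ e ∈ E, #e = 3)
    (hn : 20 ≤ ξ * Fintype.card V) : HasHomogeneousPartition E ξ ε := by
  obtain ⟨X, Y, S, hXY, hXS, hYS, hunion, hX, hY, hS, hhom⟩ := h
  have two_le {A : Finset V} (hA : (#A : ℝ) ≥ ξ / 10 * Fintype.card V) : 2 ≤ #A := by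
    have : (2 : ℝ) ≤ #A := by linarith
    exact_mod_cast this
  exact ⟨X, Y, S, hXY, hXS, hYS, hunion, hX, hY, hS,
    hhom.of_complHypergraph hE hXY (two_le hX) (two_le hY)⟩

lemma HasHomogeneousPartition.of_disjoint (hXY : Disjoint X Y)
    (hX : ξ / 10 * Fintype.card V ≤ #X) (hY : ξ / 10 * Fintype.card V ≤ #Y)
    (hS : (#(univ.erase v \ (X ∪ Y)) : ℝ) ≤ 2 / 5 * ξ * Fintype.card V)
    (hn : 10 ≤ ξ * Fintype.card V) (hhom : EpsHomogeneous E X Y ε) :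
    HasHomogeneousPartition E ξ ε := by
  refine ⟨X, Y, univ \ (X ∪ Y), hXY, disjoint_of_subset_left subset_union_left disjoint_sdiff,
    disjoint_of_subset_left subset_union_right disjoint_sdiff,
    union_sdiff_of_subset (subset_univ _), hX, hY, ?_, hhom⟩
  have hcard : (#(univ \ (X ∪ Y)) : ℝ) ≤ #(univ.erase v \ (X ∪ Y)) + 1 := by
    rw [erase_sdiff_comm]
    exact_mod_cast Nat.sub_le_iff_le_add.1 pred_card_le_card_erase
  linarith

lemma two_mul_add_two_mul_div_le_sq (hξ : 0 < ξ) (hξ₁ : ξ < 1) (hη : 0 < η)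
    (hηε : η ≤ ε ^ 2 * ξ ^ 8 / 10 ^ 13) :
    2 * η + 2 * (50000 * η / ξ ^ 2) ≤ (ε * ξ ^ 3 / 4000) ^ 2 := by
  have hξη : η ≤ η / ξ ^ 2 := le_div_self hη.le (by positivity) (pow_le_one₀ hξ.le hξ₁.le)
  have hdiv : η / ξ ^ 2 ≤ ε ^ 2 * ξ ^ 6 / 10 ^ 13 := by
    rw [div_le_iff₀ (by positivity)]
    linarith
  have : 0 ≤ ε ^ 2 * ξ ^ 6 := by positivity
  calc 2 * η + 2 * (50000 * η / ξ ^ 2) = 2 * η + 100000 * (η / ξ ^ 2) := by ring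
    _ ≤ ε ^ 2 * ξ ^ 6 / 16000000 := by linarith
    _ = (ε * ξ ^ 3 / 4000) ^ 2 := by ring

lemma IsDecomposition.hasHomogeneousPartition
    (h : IsDecomposition G (univ.erase v) (Fintype.card V) ξ η X Y₁ Y₂ Z₁ Z₂)
    (hG : IsLink E v G) (hE : ∀ e ∈ E, #e = 3) (hξ : 0 < ξ) (hξ₁ : ξ < 1) (hε : 0 < ε)
    (hε₁ : ε < 1) (hη : 0 < η) (hηε : η ≤ ε ^ 2 * ξ ^ 8 / 10 ^ 13)
    (hn : 100 ≤ ξ * Fintype.card V) (hηn : 1 ≤ η * Fintype.card V)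
    (hbad : badCount E v (univ.erase v) ≤ η * Fintype.card V ^ 4)
    (hlink : linkD2Count E v (univ.erase v) ≤ η * Fintype.card V ^ 3) :
    HasHomogeneousPartition E ξ ε := by
  have hn₀ : (0 : ℝ) < Fintype.card V := pos_of_mul_pos_right (by linarith) hξ.le
  have hW : (#(univ.erase v) : ℝ) ≤ Fintype.card V := Nat.cast_le.2 (card_le_univ _)
  have hω₀ : 0 < ε * ξ ^ 3 / 4000 := by positivity
  have hκ := two_mul_add_two_mul_div_le_sq hξ hξ₁ hη hηε
  have hYYX := h.tripleCount_le hG hE (notMem_erase v univ) hW hn₀ hξ hξ₁ hη hbad hlink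
  have hXXY := tripleCount_swap_le hE hW h.left_subset h.right_subset hηn hω₀.le hκ hbad hYYX
  have hω₁ : ε * ξ ^ 3 / 4000 ≤ 1 := by
    have : ε * ξ ^ 3 ≤ 1 := mul_le_one₀ hε₁.le (by positivity) (pow_le_one₀ hξ.le hξ₁.le)
    linarith
  have hκω : 50000 * η / ξ ^ 2 ≤ ε * ξ ^ 3 / 4000 := by
    have : 0 < 50000 * η / ξ ^ 2 := by positivity
    linarith [pow_le_of_le_one hω₀.le hω₁ two_ne_zero]
  refine .of_disjoint h.disjoint h.le_card_left h.le_card_right h.card_sdiff_le (by linarith)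
    (Or.inr ⟨?_, ?_⟩)
  · exact dXXY_le_of_tripleCount_le hE h.disjoint hξ hε.le hn h.le_card_left h.le_card_right hXXY
  · exact dXXY_le_of_tripleCount_le hE h.disjoint.symm hξ hε.le hn h.le_card_right h.le_card_left
      (hYYX.trans (by gcongr))

lemma le_div_hundred (hξ : 0 < ξ) (hξ₁ : ξ < 1) (hε : 0 < ε) (hε₁ : ε < 1)
    (hηε : η ≤ ε ^ 2 * ξ ^ 8 / 10 ^ 13) : η ≤ ξ / 100 := by
  have : ε ^ 2 * ξ ^ 8 ≤ 1 * ξ :=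
    mul_le_mul (pow_le_one₀ hε.le hε₁.le) (pow_le_of_le_one hξ.le hξ₁.le (by norm_num))
      (by positivity) one_pos.le
  linarith

lemma pow_div_pow_mul_pow_le (hξ : 0 ≤ ξ) (hξ₁ : ξ ≤ 1) (hη : 0 ≤ η) (hη₁ : η ≤ 1) :
    (η ^ 5 / 1000) ^ 4 * (ξ / 5) ^ 4 ≤ η := by
  calc (η ^ 5 / 1000) ^ 4 * (ξ / 5) ^ 4 = η ^ 20 * ξ ^ 4 / (10 ^ 12 * 625) := by ring
    _ ≤ η * 1 / 1 := by
      gcongr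
      · exact pow_le_of_le_one hη hη₁ (by norm_num)
      · exact pow_le_one₀ hξ hξ₁
      · norm_num
    _ = η := by ring

theorem hasHomogeneousPartition_of_badCount_le (hE : ∀ e ∈ E, #e = 3) (hξ : 0 < ξ) (hξ₁ : ξ < 1)
    (hε : 0 < ε) (hε₁ : ε < 1) (hη : 0 < η) (hηε : η ≤ ε ^ 2 * ξ ^ 8 / 10 ^ 13)
    (hn : 100 ≤ ξ * Fintype.card V) (hηn : 1 ≤ η * Fintype.card V)
    (hdens : ξ ≤ dLinkDensity E v) (hdens' : dLinkDensity E v ≤ 1 - ξ)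
    (hp4 : badCount E v (univ.erase v)
      ≤ (η ^ 5 / 1000) ^ 4 * (ξ / 5) ^ 4 * Fintype.card V ^ 4)
    (hlink : linkD2Count E v (univ.erase v) ≤ η * Fintype.card V ^ 3) :
    HasHomogeneousPartition E ξ ε := by
  have hV' : (100 : ℝ) ≤ Fintype.card V := by nlinarith
  have hV : 100 ≤ Fintype.card V := by exact_mod_cast hV'
  have hηξ := le_div_hundred hξ hξ₁ hε hε₁ hηε
  have hbad : badCount E v (univ.erase v) ≤ η * Fintype.card V ^ 4 :=
    hp4.trans <| mul_le_mul_of_nonneg_right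
      (pow_div_pow_mul_pow_le hξ.le hξ₁.le hη.le (by linarith)) (by positivity)
  have hG := isLink_linkGraph E v
  have hW : (#(univ.erase v) : ℝ) = Fintype.card V - 1 := by
    rw [card_erase_of_mem (mem_univ v), card_univ, Nat.cast_sub (by omega), Nat.cast_one]
  have hcount : p4Count (linkGraph E v) (univ.erase v)
      ≤ (η ^ 5 / 1000) ^ 4 * (ξ / 5 * Fintype.card V) ^ 4 :=
    (hG.p4Count_le_badCount hE (notMem_erase v univ)).trans (hp4.trans_eq (by ring))
  have hcross := hG.le_crossCount hE hV hξ.le hdens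
  have hcross' := hG.compl.le_crossCount card_of_mem_complHypergraph hV hξ.le
    (by rw [dLinkDensity_complHypergraph hE (by omega)]; linarith)
  obtain ⟨X, Y₁, Y₂, Z₁, Z₂, h⟩ | ⟨X, Y₁, Y₂, Z₁, Z₂, h⟩ :=
    exists_isDecomposition_or_compl hn hξ hξ₁ hη hηξ (by linarith) (by linarith) hcross hcross'
      hcount
  · exact h.hasHomogeneousPartition hG hE hξ hξ₁ hε hε₁ hη hηε hn hηn hbad hlink
  · rw [← badCount_complHypergraph hE] at hbad
    rw [← linkD2Count_complHypergraph hE] at hlink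
    exact (h.hasHomogeneousPartition hG.compl card_of_mem_complHypergraph hξ hξ₁ hε hε₁ hη hηε hn
      hηn hbad hlink).of_complHypergraph hE (by linarith)

theorem hasHomogeneousPartition_of_inducedD2Count_le {δ : ℝ} (hE : ∀ e ∈ E, #e = 3)
    (hξ : 0 < ξ) (hξ₁ : ξ < 1) (hε : 0 < ε) (hε₁ : ε < 1) (hη : 0 < η)
    (hηε : η ≤ ε ^ 2 * ξ ^ 8 / 10 ^ 13) (hn : 100 ≤ ξ * Fintype.card V)
    (hηn : 1 ≤ η * Fintype.card V) (hdens : ξ ≤ dLinkDensity E v)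
    (hdens' : dLinkDensity E v ≤ 1 - ξ)
    (hδ : 512 * δ ≤ (η ^ 5 / 1000) ^ 4 * (ξ / 5) ^ 4)
    (hD2 : inducedD2Count E ≤ δ * Fintype.card V ^ 4)
    (hD2v : inducedD2CountVia E v ≤ δ * Fintype.card V ^ 3) :
    HasHomogeneousPartition E ξ ε := by
  have hηξ := le_div_hundred hξ hξ₁ hε hε₁ hηε
  refine hasHomogeneousPartition_of_badCount_le hE hξ hξ₁ hε hε₁ hη hηε hn hηn hdens hdens' ?_ ?_
  · calc badCount E v (univ.erase v)
        ≤ 256 * inducedD2Count E + 256 * (Fintype.card V * inducedD2CountVia E v) :=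
          badCount_le_inducedD2Count E v _ (card_le_univ _)
      _ ≤ 256 * (δ * Fintype.card V ^ 4)
          + 256 * (Fintype.card V * (δ * Fintype.card V ^ 3)) := by gcongr
      _ = 512 * δ * Fintype.card V ^ 4 := by ring
      _ ≤ _ := by gcongr
  · calc linkD2Count E v (univ.erase v) ≤ 64 * inducedD2CountVia E v :=
          linkD2Count_le_inducedD2CountVia E v _
      _ ≤ 512 * inducedD2CountVia E v := by gcongr; norm_num
      _ ≤ 512 * (δ * Fintype.card V ^ 3) := by gcongr
      _ = 512 * δ * Fintype.card V ^ 3 := by ring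
      _ ≤ η * Fintype.card V ^ 3 := by
        gcongr
        exact hδ.trans (pow_div_pow_mul_pow_le hξ.le hξ₁.le hη.le (by linarith))

/-- The exponent and constant `C` of the theorem. The exponent only has to be at least
`164`; the magnitude absorbs the numerical factors of `(η ^ 5 / 1000) ^ 4 * (ξ / 5) ^ 4` at
`η = (ξ * ε) ^ 8 / 10 ^ 13`. -/
noncomputable def polynomialConstant : ℝ := (10 ^ 28) ^ 10

lemma le_polynomialConstant : (10 ^ 20 : ℝ) ≤ polynomialConstant := by
  norm_num [polynomialConstant]

lemma rpow_polynomialConstant_le {p : ℝ} (hp : 0 < p) (hp₁ : p ≤ 1) :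
    p ^ polynomialConstant ≤ p ^ 164 := by
  rw [← Real.rpow_natCast p 164]
  refine Real.rpow_le_rpow_of_exponent_ge hp hp₁ (le_trans ?_ le_polynomialConstant)
  norm_num

lemma polynomialConstant_le_mul_pow {p n : ℝ} (hp : 0 < p) (hp₁ : p ≤ 1)
    (hn : n ≥ polynomialConstant * p ^ (-polynomialConstant)) :
    polynomialConstant ≤ p ^ 8 * n := by
  have hn₀ : 0 ≤ n := le_trans (by unfold polynomialConstant; positivity) hn
  rw [ge_iff_le, Real.rpow_neg hp.le, mul_inv_le_iff₀ (Real.rpow_pos_of_pos hp _)] at hn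
  calc polynomialConstant ≤ n * p ^ polynomialConstant := hn
    _ ≤ n * p ^ 8 := by
      gcongr
      exact (rpow_polynomialConstant_le hp hp₁).trans
        (pow_le_pow_of_le_one hp.le hp₁ (by norm_num))
    _ = p ^ 8 * n := mul_comm _ _

lemma rpow_div_polynomialConstant_le {p : ℝ} (hp : 0 < p) (hp₁ : p ≤ 1) (hpξ : p ≤ ξ) :
    512 * (p ^ polynomialConstant / polynomialConstant)
      ≤ ((p ^ 8 / 10 ^ 13) ^ 5 / 1000) ^ 4 * (ξ / 5) ^ 4 := by
  calc 512 * (p ^ polynomialConstant / polynomialConstant)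
      ≤ 512 * (p ^ 164 / polynomialConstant) := by
        gcongr
        · unfold polynomialConstant; positivity
        · exact rpow_polynomialConstant_le hp hp₁
    _ = p ^ 164 * (512 / polynomialConstant) := by ring
    _ ≤ p ^ 164 * (1 / ((10 ^ 13) ^ 20 * 10 ^ 12 * 625)) := by
        gcongr ?_ * ?_
        norm_num [polynomialConstant]
    _ = p ^ 160 * p ^ 4 * (1 / ((10 ^ 13) ^ 20 * 10 ^ 12 * 625)) := by ring
    _ ≤ p ^ 160 * ξ ^ 4 * (1 / ((10 ^ 13) ^ 20 * 10 ^ 12 * 625)) := by gcongr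
    _ = ((p ^ 8 / 10 ^ 13) ^ 5 / 1000) ^ 4 * (ξ / 5) ^ 4 := by ring

end HomogeneousPartition

/-- The main lemma: with polynomial dependencies, a vertex with link density bounded away
from 0 and 1 in a hypergraph with few induced copies of `D₂` yields an `ε`-homogeneous
partition into two large parts and a small leftover set. -/
theorem main_lemma :
    ∃ C : ℝ, C > 0 ∧ ∀ ξ ε : ℝ, 0 < ξ → ξ < 1 → 0 < ε → ε < 1 →
      ∀ (V : Type) [Fintype V] [DecidableEq V] (E : Finset (Finset V)) (v : V),
        (∀ e ∈ E, e.card = 3) →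
        (Fintype.card V : ℝ) ≥ C * (ξ * ε) ^ (-C) →
        ξ ≤ dLinkDensity E v →
        dLinkDensity E v ≤ 1 - ξ →
        (inducedD2Count E : ℝ) < ((ξ * ε) ^ C / C) * (Fintype.card V : ℝ) ^ 4 →
        (inducedD2CountVia E v : ℝ) < ((ξ * ε) ^ C / C) * (Fintype.card V : ℝ) ^ 3 →
        ∃ X Y S : Finset V,
          Disjoint X Y ∧ Disjoint X S ∧ Disjoint Y S ∧
          X ∪ Y ∪ S = Finset.univ ∧
          (X.card : ℝ) ≥ ξ / 10 * (Fintype.card V : ℝ) ∧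
          (Y.card : ℝ) ≥ ξ / 10 * (Fintype.card V : ℝ) ∧
          (S.card : ℝ) ≤ ξ / 2 * (Fintype.card V : ℝ) ∧
          EpsHomogeneous E X Y ε := by
  refine ⟨polynomialConstant, lt_of_lt_of_le (by norm_num) le_polynomialConstant, ?_⟩
  intro ξ ε hξ hξ₁ hε hε₁ V _ _ E v hE hn hdens hdens' hD2 hD2v
  have hp : 0 < ξ * ε := mul_pos hξ hε
  have hpξ : ξ * ε ≤ ξ := mul_le_of_le_one_right hξ.le hε₁.le
  have hp₁ : ξ * ε ≤ 1 := hpξ.trans hξ₁.le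
  have hp₈ : (ξ * ε) ^ 8 ≤ ξ := (pow_le_of_le_one hp.le hp₁ (by norm_num)).trans hpξ
  have hlarge : 10 ^ 20 ≤ (ξ * ε) ^ 8 * Fintype.card V :=
    le_polynomialConstant.trans (polynomialConstant_le_mul_pow hp hp₁ hn)
  have hη : (ξ * ε) ^ 8 / 10 ^ 13 ≤ ε ^ 2 * ξ ^ 8 / 10 ^ 13 := by
    rw [mul_pow, mul_comm (ξ ^ 8)]
    gcongr ?_ * _ / _
    exact pow_le_pow_of_le_one hε.le hε₁.le (by norm_num)
  have hξn : 100 ≤ ξ * Fintype.card V := by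
    linarith [mul_le_mul_of_nonneg_right hp₈ (Nat.cast_nonneg (Fintype.card V))]
  exact hasHomogeneousPartition_of_inducedD2Count_le hE hξ hξ₁ hε hε₁ (by positivity) hη hξn
    (by linarith) hdens hdens' (rpow_div_polynomialConstant_le hp hp₁ hpξ) hD2.le hD2v.le
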